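/- Assume the multiplicity parameters are real with 0 < τ_a² < 1 for all a ∈ R. Let ω ∈ P⁺ be minuscule or quasi-minuscule, let ω∗ := −v₀ω, where v₀ is the longest element of W₀ (ω∗ is again minuscule or quasi-minuscule), and define the discrete Laplacians (L_ω f)(λ) := ∑_{ν∈W₀ω} ( a_{λ,ν} f(λ−ν) + b_{λ,ν}(1−τ₀⁻²) f(λ) ) and similarly L_{ω∗}. Then: (a) a_{λ,ν} δ_λ = a_{λ−ν,−ν} δ_{λ−ν} for every λ ∈ P and ν ∈ W₀ω, where δ_λ := τ_{w_λ}²; and (b) L_ω is a bounded operator on ℓ²(P,δ) and ⟨L_ω f, g⟩_δ = ⟨f, L_{ω∗} g⟩_δ for all f, g ∈ ℓ²(P,δ), where ⟨f,g⟩_δ := ∑_{λ∈P} f(λ)\overline{g(λ)}δ_λ. -/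

import Mathlib

open scoped RealInnerProductSpace BigOperators Classical

noncomputable section

/-- Alternating composition `A ∘ B ∘ A ∘ ⋯` with `m` factors (starting with `A`). -/
def altComp {α : Type*} (A B : α → α) : ℕ → (α → α)
  | 0 => id
  | m + 1 => A ∘ altComp B A m

/-- The sign of a real number, as an integer (with `sgnZ 0 = 0`). -/
def sgnZ (x : ℝ) : ℤ := if 0 < x then 1 else if x < 0 then -1 else 0

/-- The function `v(x) = (1-t²)∫₀ˣ dy/(1-2t cos y+t²)`. -/
def mvfun (t x : ℝ) : ℝ :=
  (1 - t ^ 2) * ∫ y in (0:ℝ)..x, 1 / (1 - 2 * t * Real.cos y + t ^ 2)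

section AffineOps

variable {V : Type*} [NormedAddCommGroup V] [InnerProductSpace ℝ V]

/-- The coroot `α∨ = 2α/⟨α,α⟩`. -/
def coroot (α : V) : V := (2 / ⟪α, α⟫) • α

/-- The affine root `a = α∨ + r c` (encoded as the pair `(α, r)`), as an affine
function on `V`. -/
def aval (c : ℝ) (a : V × ℤ) (x : V) : ℝ := ⟪x, coroot a.1⟫ + a.2 * c

/-- The affine reflection `s_a(x) = x - a(x) α` attached to `a = α∨ + r c`. -/
def sAff (c : ℝ) (a : V × ℤ) (x : V) : V := x - aval c a x • a.1

/-- `w` maps the affine root `a` to the affine root `b`, i.e. `(wa)(x) = a(w⁻¹x) = b(x)`. -/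
def mapsRoot (c : ℝ) (w : Equiv.Perm V) (a b : V × ℤ) : Prop :=
  ∀ x : V, aval c a (w⁻¹ x) = aval c b x

/-- The linear part `w′` of an affine transformation `w`. -/
def linPart (w : Equiv.Perm V) (x : V) : V := w x - w 0

variable {R : Type*} [Field R]

/-- The difference-reflection operator `T̂_a`. -/
def hatT (c : ℝ) (τ : V × ℤ → R) (a : V × ℤ) (f : V → R) (x : V) : R :=
  if 0 < aval c a x then τ a * f (sAff c a x)
  else if aval c a x = 0 then τ a * f x
  else (τ a)⁻¹ * f (sAff c a x) + (τ a - (τ a)⁻¹) * f x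

/-- The discrete integral operator `J_a`. -/
def Jop (c : ℝ) (a : V × ℤ) (f : V → R) (x : V) : R :=
  if 0 < aval c a x then
    - ∑ k ∈ Finset.Icc (1 : ℤ) ⌊aval c a x⌋, f (x - k • a.1)
  else if aval c a x = 0 then 0
  else ∑ k ∈ Finset.Ico (0 : ℤ) (-⌊aval c a x⌋), f (x + k • a.1)

/-- The integral-reflection operator `I_a = τ_a s_a + (τ_a - τ_a⁻¹) J_a`. -/
def Iop (c : ℝ) (τ : V × ℤ → R) (a : V × ℤ) (f : V → R) (x : V) : R :=
  τ a * f (sAff c a x) + (τ a - (τ a)⁻¹) * Jop c a f x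

end AffineOps

/-- An irreducible reduced crystallographic root system spanning `V`, together with a
choice of positive roots, simple roots, and the highest short root. -/
structure RootSystemData (V : Type*) [NormedAddCommGroup V] [InnerProductSpace ℝ V] :
    Type _ where
  n : ℕ
  n_pos : 1 ≤ n
  rank_eq : Module.finrank ℝ V = n
  R0 : Finset V
  ne_zero : ∀ α ∈ R0, α ≠ (0 : V)
  span_top : Submodule.span ℝ (R0 : Set V) = ⊤
  reduced : ∀ α ∈ R0, ∀ t : ℝ, t • α ∈ R0 → t = 1 ∨ t = -1
  crystallographic : ∀ α ∈ R0, ∀ β ∈ R0, ∃ k : ℤ, ⟪β, coroot α⟫ = (k : ℝ)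
  reflect_mem : ∀ α ∈ R0, ∀ β ∈ R0, β - ⟪β, coroot α⟫ • α ∈ R0
  irreducible : ∀ S : Finset V, S ⊆ R0 →
      (∀ a ∈ S, ∀ b ∈ R0, b ∉ S → ⟪a, b⟫ = 0) → S = ∅ ∨ S = R0
  pos : Finset V
  pos_subset : pos ⊆ R0
  pos_or_neg : ∀ α ∈ R0, α ∈ pos ∨ -α ∈ pos
  pos_not_both : ∀ α ∈ pos, -α ∉ pos
  pos_add : ∀ α ∈ pos, ∀ β ∈ pos, α + β ∈ R0 → α + β ∈ pos
  simpleRoot : Fin n → V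
  simpleRoot_mem : ∀ j, simpleRoot j ∈ pos
  pos_natCombo : ∀ α ∈ pos, ∃ k : Fin n → ℕ, α = ∑ j, (k j : ℝ) • simpleRoot j
  hshort : V
  hshort_mem : hshort ∈ pos
  hshort_short : ∀ α ∈ R0, ‖hshort‖ ≤ ‖α‖
  hshort_highest : ∀ α ∈ R0, ‖α‖ = ‖hshort‖ →
      ∃ k : Fin n → ℕ, hshort - α = ∑ j, (k j : ℝ) • simpleRoot j

namespace RootSystemData

variable {V : Type*} [NormedAddCommGroup V] [InnerProductSpace ℝ V]
variable (D : RootSystemData V)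

/-- The weight lattice `P`. -/
def weightLattice : Set V :=
  {x : V | ∀ α ∈ D.R0, ∃ k : ℤ, ⟪x, coroot α⟫ = (k : ℝ)}

/-- The root lattice `Q`. -/
def rootLattice : Set V := (Submodule.span ℤ (D.R0 : Set V) : Set V)

/-- The coweight lattice `P∨`. -/
def coweightLattice : Set V :=
  {x : V | ∀ α ∈ D.R0, ∃ k : ℤ, ⟪x, α⟫ = (k : ℝ)}

/-- The dominant cone. -/
def dominant : Set V := {x : V | ∀ α ∈ D.pos, 0 ≤ ⟪x, coroot α⟫}

/-- `ω` is a minuscule (dominant) weight. -/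
def IsMinuscule (ω : V) : Prop :=
  ω ∈ D.weightLattice ∧ ω ∈ D.dominant ∧ ω ≠ 0 ∧
    ∀ α ∈ D.pos, ⟪ω, coroot α⟫ ≤ 1

/-- `ω` is the quasi-minuscule weight, i.e. the highest short root. -/
def IsQuasiMinuscule (ω : V) : Prop := ω = D.hshort

/-- The saturated set `P_ϑ` containing the (quasi-)minuscule weights. -/
def Ptheta : Set V :=
  {ν : V | ν ∈ D.weightLattice ∧ ∀ α ∈ D.R0, α ≠ ν → |⟪ν, coroot α⟫| ≤ 1}

/-- Half sum of the positive roots. -/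
def rhoHalf : V := (2⁻¹ : ℝ) • ∑ α ∈ D.pos, α

/-- Half sum of the positive coroots. -/
def rhoVee : V := (2⁻¹ : ℝ) • ∑ α ∈ D.pos, coroot α

/-- `(α, r)` encodes an affine root. -/
def IsAffRoot (a : V × ℤ) : Prop := a.1 ∈ D.R0

/-- `(α, r)` encodes a positive affine root. -/
def IsAffPos (a : V × ℤ) : Prop :=
  a.1 ∈ D.R0 ∧ (1 ≤ a.2 ∨ (a.2 = 0 ∧ a.1 ∈ D.pos))

/-- `(α, r)` encodes a negative affine root. -/
def IsAffNeg (a : V × ℤ) : Prop := D.IsAffPos (-a.1, -a.2)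

/-- The simple affine roots `a₀ = -ϑ∨ + c`, `a_j = α_j∨`. -/
def aSimple (j : Fin (D.n + 1)) : V × ℤ :=
  Fin.cons (α := fun _ => V × ℤ) (-D.hshort, (1 : ℤ))
    (fun i => (D.simpleRoot i, (0 : ℤ))) j

/-- The reflections generating the finite Weyl group `W₀`. -/
def W0Gens : Set (Equiv.Perm V) :=
  {e | ∃ α ∈ D.R0, ∀ x, e x = x - ⟪x, coroot α⟫ • α}

/-- The finite Weyl group `W₀`. -/
def W0 : Subgroup (Equiv.Perm V) := Subgroup.closure D.W0Gens

variable (c : ℝ)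

/-- The affine reflections generating the affine Weyl group `W_R`. -/
def AffGens : Set (Equiv.Perm V) :=
  {e | ∃ a : V × ℤ, D.IsAffRoot a ∧ ∀ x, e x = sAff c a x}

/-- The affine Weyl group `W_R`. -/
def WR : Subgroup (Equiv.Perm V) := Subgroup.closure (D.AffGens c)

/-- The translations `t_{cλ}`, `λ ∈ P`. -/
def TransGens : Set (Equiv.Perm V) :=
  {e | ∃ lam ∈ D.weightLattice, ∀ x : V, e x = x + c • lam}

/-- The extended affine Weyl group `W = W₀ ⋉ t(cP)`. -/
def Wext : Subgroup (Equiv.Perm V) :=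
  Subgroup.closure (D.AffGens c ∪ D.TransGens c)

/-- The set `R(w) = R⁺ ∩ w⁻¹(R⁻)`. -/
def RW (w : Equiv.Perm V) : Set (V × ℤ) :=
  {a | D.IsAffPos a ∧ ∃ b : V × ℤ, D.IsAffNeg b ∧ mapsRoot c w a b}

/-- The length `ℓ(w) = #R(w)`. -/
def len (w : Equiv.Perm V) : ℕ := (D.RW c w).ncard

/-- The closed fundamental alcove `A_c`. -/
def alcove : Set V := {x | ∀ a : V × ℤ, D.IsAffPos a → 0 ≤ aval c a x}

/-- `wmin x` is the unique shortest element of the affine Weyl group mapping `x` into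
the fundamental alcove. -/
def IsWmin (wmin : V → Equiv.Perm V) : Prop :=
  ∀ x : V, wmin x ∈ D.WR c ∧ (wmin x) x ∈ D.alcove c ∧
    ∀ w ∈ D.WR c, w x ∈ D.alcove c → D.len c (wmin x) < D.len c w ∨ w = wmin x

/-- One step in the Bruhat order: `w < w s_a` whenever `ℓ(w) < ℓ(w s_a)`. -/
def bruhatStep (w w' : Equiv.Perm V) : Prop :=
  ∃ a : V × ℤ, D.IsAffPos a ∧ ∃ e : Equiv.Perm V,
    (∀ x, e x = sAff c a x) ∧ w' = w * e ∧ D.len c w < D.len c w'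

/-- The Bruhat order on the affine Weyl group. -/
def bruhatLE (w w' : Equiv.Perm V) : Prop :=
  Relation.ReflTransGen (D.bruhatStep c) w w'

/-- The partial order on `V`: `x ≤ y` iff `x₊ = y₊` and `w_x ≤ w_y` (Bruhat). -/
def vle (wmin : V → Equiv.Perm V) (x y : V) : Prop :=
  (wmin x) x = (wmin y) y ∧ D.bruhatLE c (wmin x) (wmin y)

/-- The interval `[x, y]` for the order `vle`. -/
def vInterval (wmin : V → Equiv.Perm V) (x y : V) : Set V :=
  {z : V | D.vle c wmin x z ∧ D.vle c wmin z y}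

/-- The partial order `⪯` on the weight lattice:
`μ ⪯ λ` iff `λ - μ ∈ Q` and `Conv [μ₊, μ] ⊆ Conv [λ₊, λ]`. -/
def pleq (wmin : V → Equiv.Perm V) (μ lam : V) : Prop :=
  lam - μ ∈ D.rootLattice ∧
    convexHull ℝ (D.vInterval c wmin ((wmin μ) μ) μ)
      ⊆ convexHull ℝ (D.vInterval c wmin ((wmin lam) lam) lam)

section Ops

variable {R : Type*} [Field R]

/-- `τ` is a multiplicity function: nonvanishing on affine roots, and invariant
under the (extended affine) Weyl group action on the affine roots. -/
def IsMultiplicity (τ : V × ℤ → R) : Prop :=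
  (∀ a : V × ℤ, D.IsAffRoot a → τ a ≠ 0) ∧
    ∀ w ∈ D.Wext c, ∀ a b : V × ℤ, D.IsAffRoot a → D.IsAffRoot b →
      mapsRoot c w a b → τ a = τ b

/-- `τ_w = ∏_{a ∈ R(w)} τ_a`. -/
def tauw (τ : V × ℤ → R) (w : Equiv.Perm V) : R := ∏ᶠ a ∈ D.RW c w, τ a

/-- `τ₀`, the multiplicity of the affine simple root `a₀`. -/
def tauZero (τ : V × ℤ → R) : R := τ (-D.hshort, (1 : ℤ))

/-- The operator `I_{j₁} ∘ ⋯ ∘ I_{jℓ}` attached to a word in the simple reflections. -/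
def wordOp (τ : V × ℤ → R) (l : List (Fin (D.n + 1))) : (V → R) → V → R :=
  (l.map fun j => Iop c τ (D.aSimple j)).foldr (· ∘ ·) id

/-- `l` is a reduced word for `w`, i.e. `w = s_{j₁} ∘ ⋯ ∘ s_{jℓ}` with `ℓ = ℓ(w)`. -/
def IsReducedWord (w : Equiv.Perm V) (l : List (Fin (D.n + 1))) : Prop :=
  l.length = D.len c w ∧
    ∀ x : V, w x = ((l.map fun j => sAff c (D.aSimple j)).foldr (· ∘ ·) id) x

/-- `e∨_τ(η) = ∏_{α ∈ R₀⁺} τ_{α∨}^{⟨η,α∨⟩}`. -/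
def etau (τ : V × ℤ → R) (η : V) : R :=
  ∏ α ∈ D.pos, τ (α, (0 : ℤ)) ^ ⌊⟪η, coroot α⟫⌋

/-- `h∨_τ = τ₀² e∨_τ(ϑ)`. -/
def hvee (τ : V × ℤ → R) : R := D.tauZero τ ^ 2 * D.etau τ D.hshort

/-- `θ(μ) = #{b ∈ R(w_μ) : b(μ) = -2}`. -/
def theta (wmin : V → Equiv.Perm V) (μ : V) : ℕ :=
  {b : V × ℤ | b ∈ D.RW c (wmin μ) ∧ aval c b μ = -2}.ncard

/-- The coefficient `c_{λ,η} = θ(λ-η) e∨_τ(η) (h∨_τ)^{-sign⟨λ,η∨⟩}`. -/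
def ccoef (τ : V × ℤ → R) (wmin : V → Equiv.Perm V) (lam η : V) : R :=
  (D.theta c wmin (lam - η) : R) * D.etau τ η *
    D.hvee τ ^ (-sgnZ ⟪lam, coroot η⟫)

/-- The coefficient `a_{λ,ν} = τ_{w_{w_λ(λ-ν)}} τ_{w_{w_λ(λ-ν)} w_λ} τ_{w_λ}⁻¹`. -/
def acoef (τ : V × ℤ → R) (wmin : V → Equiv.Perm V) (lam ν : V) : R :=
  D.tauw c τ (wmin ((wmin lam) (lam - ν))) *
    D.tauw c τ (wmin ((wmin lam) (lam - ν)) * wmin lam) *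
    (D.tauw c τ (wmin lam))⁻¹

/-- The coefficient `b_{λ,ν}`. -/
def bcoef (τ : V × ℤ → R) (wmin : V → Equiv.Perm V) (lam ν : V) : R :=
  if (wmin (lam - ν)) (lam - ν) = (wmin lam) lam then
    D.tauw c τ (wmin ((wmin lam) (lam - ν))) ^ 2 *
      (if D.IsAffNeg (ν, ⌊(1 - ⟪lam, coroot ν⟫) / c⌋) then 1 else 0)
  else D.ccoef c τ wmin ((wmin lam) lam) (linPart (wmin lam) ν)

/-- The intertwining operator `(𝒥f)(λ) = τ_{w_λ}⁻¹ (I_{w_λ} f)(λ₊)`, where `Iw` assigns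
to each `w_λ` the composite of integral-reflection operators along a reduced word. -/
def Jcal (τ : V × ℤ → R) (wmin : V → Equiv.Perm V)
    (Iw : Equiv.Perm V → (V → R) → V → R) (f : V → R) (x : V) : R :=
  (D.tauw c τ (wmin x))⁻¹ * Iw (wmin x) f ((wmin x) x)

end Ops

/-- The Yang–Yang type Morse function `𝒱_μ`. -/
def morse (t : V → ℝ) (μ ξ : V) : ℝ :=
  (c / 2) * ⟪ξ, ξ⟫ - 2 * Real.pi * ⟪D.rhoVee + μ, ξ⟫ +
    ∑ α ∈ D.pos, (2 / ⟪α, α⟫) * ∫ x in (0:ℝ)..(⟪ξ, α⟫), mvfun (t α) x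

/-- The critical equation `cξ + ∑_{α>0} v_α(⟨ξ,α⟩) α∨ = 2π(ρ∨+μ)`. -/
def criticalEq (t : V → ℝ) (μ ξ : V) : Prop :=
  c • ξ + ∑ α ∈ D.pos, mvfun (t α) ⟪ξ, α⟫ • coroot α
    = (2 * Real.pi) • (D.rhoVee + μ)

/-- The Hessian bilinear form `H_{η,ζ}(ξ)`. -/
def hessForm (t : V → ℝ) (ξ η ζ : V) : ℝ :=
  c * ⟪η, ζ⟫ + ∑ α ∈ D.R0,
    (1 - t α ^ 2) * ⟪η, α⟫ * ⟪ζ, α⟫ /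
      (⟪α, α⟫ * (1 - 2 * t α * Real.cos ⟪ξ, α⟫ + t α ^ 2))

/-- `κ_± = (2/n) ∑_{α>0} (1-t_α²)/(1 ± |t_α|)²`; here `s = ±1`. -/
def kappaPM (t : V → ℝ) (s : ℝ) : ℝ :=
  (2 / (D.n : ℝ)) * ∑ α ∈ D.pos, (1 - t α ^ 2) / (1 + s * |t α|) ^ 2

end RootSystemData

open RootSystemData in
/-- The orthogonality weight `δ_λ = τ_{w_λ}²`. -/
def deltaW {V : Type*} [NormedAddCommGroup V] [InnerProductSpace ℝ V]
    (D : RootSystemData V) (c : ℝ) (τ : V × ℤ → ℝ) (wmin : V → Equiv.Perm V)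
    (lam : V) : ℝ :=
  D.tauw c τ (wmin lam) ^ 2

open RootSystemData in
/-- Membership in the Hilbert space `ℓ²(P,δ)`. -/
def MemL2 {V : Type*} [NormedAddCommGroup V] [InnerProductSpace ℝ V]
    (D : RootSystemData V) (c : ℝ) (τ : V × ℤ → ℝ) (wmin : V → Equiv.Perm V)
    (f : V → ℂ) : Prop :=
  Summable fun p : D.weightLattice => ‖f p.1‖ ^ 2 * deltaW D c τ wmin p.1

open RootSystemData in
/-- The inner product `⟨f,g⟩_δ` of `ℓ²(P,δ)`. -/
def innerDelta {V : Type*} [NormedAddCommGroup V] [InnerProductSpace ℝ V]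
    (D : RootSystemData V) (c : ℝ) (τ : V × ℤ → ℝ) (wmin : V → Equiv.Perm V)
    (f g : V → ℂ) : ℂ :=
  ∑' p : D.weightLattice, f p.1 * (starRingEnd ℂ) (g p.1) * ((deltaW D c τ wmin p.1 : ℝ) : ℂ)

open RootSystemData in
/-- The squared norm of `ℓ²(P,δ)`. -/
def normSqDelta {V : Type*} [NormedAddCommGroup V] [InnerProductSpace ℝ V]
    (D : RootSystemData V) (c : ℝ) (τ : V × ℤ → ℝ) (wmin : V → Equiv.Perm V)
    (f : V → ℂ) : ℝ :=
  ∑' p : D.weightLattice, ‖f p.1‖ ^ 2 * deltaW D c τ wmin p.1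

open RootSystemData in
/-- The discrete Laplacian `(L_ω f)(λ) = ∑_{ν∈W₀ω} (a_{λ,ν} f(λ-ν) + b_{λ,ν}(1-τ₀⁻²)f(λ))`,
with `W₀ω` presented by the finset `orb`. -/
def Lop {V : Type*} [NormedAddCommGroup V] [InnerProductSpace ℝ V]
    (D : RootSystemData V) (c : ℝ) (τ : V × ℤ → ℝ) (wmin : V → Equiv.Perm V)
    (orb : Finset V) (f : V → ℂ) (lam : V) : ℂ :=
  ∑ ν ∈ orb,
    (((D.acoef c τ wmin lam ν : ℝ) : ℂ) * f (lam - ν)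
      + ((D.bcoef c τ wmin lam ν : ℝ) : ℂ)
          * (1 - (((D.tauZero τ : ℝ) : ℂ))⁻¹ ^ 2) * f lam)

/-!
Fix a point `p` in the interior of the alcove. For `w` in the affine Weyl group, `R(w)` consists of
the affine roots that are positive at `p` and negative at `w⁻¹ p`, and the minimality of `w_x`
means that `R(w_x)` consists of those that are positive at `p` and negative at `x`. Comparing sign
changes along `p`, `w⁻¹ p`, `(u w)⁻¹ p` gives `τ_u τ_{uw} = τ_w ∏ τ_a²`, the product being over
`R(u w) \ R(w)`. For `w = w_λ` and `u = w_{w_λ(λ-ν)}` this difference is `R(w_{λ-ν}) \ R(w_λ)`, so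
`a_{λ,ν} δ_λ` is the product of `τ_a²` over `R(w_λ) ∪ R(w_{λ-ν})`, which is symmetric in `λ` and
`λ - ν`.

This detailed balance, together with `0 < a_{λ,ν} ≤ 1`, makes `f ↦ a_{·,ν} f(· - ν)` a contraction
of `ℓ²(P, δ)` whose adjoint is the same operator for `-ν`, and `W₀ω∗ = -W₀ω`. The remaining
diagonal part is real and bounded. It is the same for `ω` and `ω∗`: it vanishes for minuscule `ω`,
while `W₀ω = -W₀ω` for quasi-minuscule `ω`.
-/

section WeightedL2

variable {X : Type*}

/-- Membership in the weighted space `ℓ²(X, δ)`. -/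
def MemWeightedL2 (δ : X → ℝ) (f : X → ℂ) : Prop :=
  Summable fun x => ‖f x‖ ^ 2 * δ x

/-- The squared norm of `ℓ²(X, δ)`; it is the junk value `0` outside that space. -/
def weightedNormSq (δ : X → ℝ) (f : X → ℂ) : ℝ :=
  ∑' x, ‖f x‖ ^ 2 * δ x

/-- The inner product of `ℓ²(X, δ)`, linear in the first argument. -/
def weightedInner (δ : X → ℝ) (f g : X → ℂ) : ℂ :=
  ∑' x, f x * starRingEnd ℂ (g x) * (δ x : ℂ)

/-- The weighted composition operator `f ↦ a · (f ∘ e)`. -/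
def weightedComp (a : X → ℝ) (e : Equiv.Perm X) (f : X → ℂ) (x : X) : ℂ :=
  a x * f (e x)

/-- `T` and `T'` preserve `ℓ²(X, δ)`, `T` is bounded there, and `T'` is its adjoint. -/
structure IsBoundedAdjointPair (δ : X → ℝ) (T T' : (X → ℂ) → X → ℂ) : Prop where
  mem_left : ∀ f, MemWeightedL2 δ f → MemWeightedL2 δ (T f)
  mem_right : ∀ f, MemWeightedL2 δ f → MemWeightedL2 δ (T' f)
  bounded : ∃ C : ℝ, ∀ f, MemWeightedL2 δ f →
    weightedNormSq δ (T f) ≤ C * weightedNormSq δ f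
  inner_eq : ∀ f g, MemWeightedL2 δ f → MemWeightedL2 δ g →
    weightedInner δ (T f) g = weightedInner δ f (T' g)

variable {δ : X → ℝ} {f g h : X → ℂ}

lemma norm_add_sq_mul_le {d : ℝ} (hd : 0 ≤ d) (z w : ℂ) :
    ‖z + w‖ ^ 2 * d ≤ 2 * (‖z‖ ^ 2 * d + ‖w‖ ^ 2 * d) := by
  have h : ‖z + w‖ ^ 2 ≤ 2 * (‖z‖ ^ 2 + ‖w‖ ^ 2) :=
    (pow_le_pow_left₀ (norm_nonneg _) (norm_add_le z w) 2).trans add_sq_le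
  linarith [mul_le_mul_of_nonneg_right h hd]

lemma MemWeightedL2.of_le (hδ : 0 ≤ δ) {u : X → ℝ} (hu : Summable u)
    (hf : ∀ x, ‖f x‖ ^ 2 * δ x ≤ u x) : MemWeightedL2 δ f :=
  hu.of_nonneg_of_le (fun x => mul_nonneg (sq_nonneg _) (hδ x)) hf

lemma MemWeightedL2.add (hδ : 0 ≤ δ) (hf : MemWeightedL2 δ f) (hg : MemWeightedL2 δ g) :
    MemWeightedL2 δ (f + g) :=
  .of_le hδ ((Summable.add hf hg).mul_left 2) fun x => norm_add_sq_mul_le (hδ x) (f x) (g x)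

lemma weightedNormSq_add_le (hδ : 0 ≤ δ) (hf : MemWeightedL2 δ f) (hg : MemWeightedL2 δ g) :
    weightedNormSq δ (f + g) ≤ 2 * (weightedNormSq δ f + weightedNormSq δ g) :=
  hasSum_le (fun x => norm_add_sq_mul_le (hδ x) (f x) (g x))
    (Summable.hasSum (MemWeightedL2.add hδ hf hg))
    ((hf.hasSum.add hg.hasSum).mul_left 2)

lemma MemWeightedL2.summable_inner (hδ : 0 ≤ δ) (hf : MemWeightedL2 δ f)
    (hg : MemWeightedL2 δ g) :
    Summable fun x => f x * starRingEnd ℂ (g x) * (δ x : ℂ) := by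
  refine Summable.of_norm_bounded (Summable.add hf hg) fun x => ?_
  rw [norm_mul, norm_mul, RCLike.norm_conj, Complex.norm_real, Real.norm_of_nonneg (hδ x),
    ← add_mul]
  refine mul_le_mul_of_nonneg_right ?_ (hδ x)
  have hfg : 0 ≤ ‖f x‖ * ‖g x‖ := by positivity
  linarith [two_mul_le_add_sq ‖f x‖ ‖g x‖]

lemma weightedInner_conj_symm (f g : X → ℂ) :
    starRingEnd ℂ (weightedInner δ f g) = weightedInner δ g f := by
  rw [weightedInner, Complex.conj_tsum]
  refine tsum_congr fun x => ?_
  simp only [map_mul, Complex.conj_conj, Complex.conj_ofReal]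
  ring

lemma weightedInner_add_left (hδ : 0 ≤ δ) (hf : MemWeightedL2 δ f) (hg : MemWeightedL2 δ g)
    (hh : MemWeightedL2 δ h) :
    weightedInner δ (f + g) h = weightedInner δ f h + weightedInner δ g h := by
  simp only [weightedInner, Pi.add_apply, add_mul]
  exact (hf.summable_inner hδ hh).tsum_add (hg.summable_inner hδ hh)

lemma weightedInner_add_right (hδ : 0 ≤ δ) (hf : MemWeightedL2 δ f) (hg : MemWeightedL2 δ g)
    (hh : MemWeightedL2 δ h) :
    weightedInner δ h (f + g) = weightedInner δ h f + weightedInner δ h g := by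
  rw [← weightedInner_conj_symm, weightedInner_add_left hδ hf hg hh, map_add,
    weightedInner_conj_symm, weightedInner_conj_symm]

lemma sum_weightedComp_subRight_of_neg_mem {G : Type*} [AddGroup G] {a : G → G → ℝ}
    {S S' : Finset G} (hS' : ∀ ν, ν ∈ S' ↔ -ν ∈ S) :
    ∑ ν ∈ S', weightedComp (a · ν) (Equiv.subRight ν) =
      ∑ ν ∈ S, weightedComp (a · (-ν)) (Equiv.subRight ν).symm := by
  refine Finset.sum_equiv (Equiv.neg G) hS' fun ν _ => ?_
  ext f x
  simp [weightedComp, sub_eq_add_neg]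

section WeightedComp

variable (hδ : 0 ≤ δ) (e : Equiv.Perm X) {a a' : X → ℝ}
  (ha : ∀ x, a x ∈ Set.Icc 0 1) (ha' : ∀ x, a' x ∈ Set.Icc 0 1)
  (hbal : ∀ x, a x * δ x = a' (e x) * δ (e x))
include hδ ha ha' hbal

lemma norm_weightedComp_sq_mul_le (f : X → ℂ) (x : X) :
    ‖weightedComp a e f x‖ ^ 2 * δ x ≤ ‖f (e x)‖ ^ 2 * δ (e x) := by
  have hsq : a x ^ 2 * δ x ≤ δ (e x) := calc
    a x ^ 2 * δ x ≤ a x * δ x :=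
      mul_le_mul_of_nonneg_right (pow_le_of_le_one (ha x).1 (ha x).2 two_ne_zero) (hδ x)
    _ = a' (e x) * δ (e x) := hbal x
    _ ≤ δ (e x) := mul_le_of_le_one_left (hδ _) (ha' _).2
  rw [weightedComp, norm_mul, Complex.norm_real, Real.norm_of_nonneg (ha x).1, mul_pow,
    mul_comm (a x ^ 2), mul_assoc]
  exact mul_le_mul_of_nonneg_left hsq (sq_nonneg _)

lemma MemWeightedL2.weightedComp (hf : MemWeightedL2 δ f) :
    MemWeightedL2 δ (weightedComp a e f) :=
  .of_le hδ (e.summable_iff.mpr hf) (norm_weightedComp_sq_mul_le hδ e ha ha' hbal f)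

lemma weightedNormSq_weightedComp_le (hf : MemWeightedL2 δ f) :
    weightedNormSq δ (weightedComp a e f) ≤ weightedNormSq δ f :=
  hasSum_le (norm_weightedComp_sq_mul_le hδ e ha ha' hbal f)
    (Summable.hasSum (hf.weightedComp hδ e ha ha' hbal)) (e.hasSum_iff.mpr hf.hasSum)

end WeightedComp

namespace IsBoundedAdjointPair

variable {T T' S S' : (X → ℂ) → X → ℂ}

lemma zero : IsBoundedAdjointPair δ 0 0 where
  mem_left _ _ := by simp [MemWeightedL2]
  mem_right _ _ := by simp [MemWeightedL2]
  bounded := ⟨0, fun _ _ => by simp [weightedNormSq]⟩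
  inner_eq _ _ _ _ := by simp [weightedInner]

lemma add (hδ : 0 ≤ δ) (hT : IsBoundedAdjointPair δ T T') (hS : IsBoundedAdjointPair δ S S') :
    IsBoundedAdjointPair δ (T + S) (T' + S') where
  mem_left f hf := (hT.mem_left f hf).add hδ (hS.mem_left f hf)
  mem_right f hf := (hT.mem_right f hf).add hδ (hS.mem_right f hf)
  bounded := by
    obtain ⟨B, hB⟩ := hT.bounded
    obtain ⟨C, hC⟩ := hS.bounded
    refine ⟨2 * (B + C), fun f hf => ?_⟩
    refine (weightedNormSq_add_le hδ (hT.mem_left f hf) (hS.mem_left f hf)).trans ?_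
    linarith [hB f hf, hC f hf]
  inner_eq f g hf hg := by
    rw [Pi.add_apply, Pi.add_apply,
      weightedInner_add_left hδ (hT.mem_left f hf) (hS.mem_left f hf) hg,
      weightedInner_add_right hδ (hT.mem_right g hg) (hS.mem_right g hg) hf,
      hT.inner_eq f g hf hg, hS.inner_eq f g hf hg]

lemma sum (hδ : 0 ≤ δ) {ι : Type*} {s : Finset ι} {T T' : ι → (X → ℂ) → X → ℂ}
    (h : ∀ i ∈ s, IsBoundedAdjointPair δ (T i) (T' i)) :
    IsBoundedAdjointPair δ (∑ i ∈ s, T i) (∑ i ∈ s, T' i) := by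
  induction s using Finset.induction_on with
  | empty => exact zero
  | insert i s hi ih =>
    rw [Finset.sum_insert hi, Finset.sum_insert hi]
    exact add hδ (h i (s.mem_insert_self i)) (ih fun j hj => h j (Finset.mem_insert_of_mem hj))

lemma multiplier (hδ : 0 ≤ δ) {β : X → ℝ} {B : ℝ} (hβ : ∀ x, |β x| ≤ B) :
    IsBoundedAdjointPair δ (fun f x => β x * f x) (fun f x => β x * f x) := by
  have hle (f : X → ℂ) (x : X) :
      ‖(β x : ℂ) * f x‖ ^ 2 * δ x ≤ B ^ 2 * (‖f x‖ ^ 2 * δ x) := by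
    rw [norm_mul, Complex.norm_real, Real.norm_eq_abs, mul_pow, mul_assoc]
    exact mul_le_mul_of_nonneg_right (pow_le_pow_left₀ (abs_nonneg _) (hβ x) 2)
      (mul_nonneg (sq_nonneg _) (hδ x))
  have hmem (f : X → ℂ) (hf : MemWeightedL2 δ f) : MemWeightedL2 δ fun x => β x * f x :=
    .of_le hδ (hf.mul_left (B ^ 2)) (hle f)
  refine ⟨hmem, hmem, ⟨B ^ 2, fun f hf => ?_⟩, fun f g _ _ => tsum_congr fun x => ?_⟩
  · exact hasSum_le (hle f) (hmem f hf).hasSum (hf.hasSum.mul_left _)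
  · simp only [map_mul, Complex.conj_ofReal]
    ring

lemma weightedComp (hδ : 0 ≤ δ) (e : Equiv.Perm X) {a a' : X → ℝ}
    (ha : ∀ x, a x ∈ Set.Icc 0 1) (ha' : ∀ x, a' x ∈ Set.Icc 0 1)
    (hbal : ∀ x, a x * δ x = a' (e x) * δ (e x)) :
    IsBoundedAdjointPair δ (_root_.weightedComp a e) (_root_.weightedComp a' e.symm) where
  mem_left _ hf := hf.weightedComp hδ e ha ha' hbal
  mem_right _ hf := hf.weightedComp hδ e.symm ha' ha fun y => by simp [hbal]
  bounded := ⟨1, fun f hf => (one_mul (weightedNormSq δ f)).symm ▸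
    weightedNormSq_weightedComp_le hδ e ha ha' hbal hf⟩
  inner_eq f g _ _ := by
    refine Eq.trans ?_
      (e.tsum_eq fun y => f y * starRingEnd ℂ (_root_.weightedComp a' e.symm g y) * (δ y : ℂ))
    refine tsum_congr fun x => ?_
    have hx : (a x * δ x : ℂ) = a' (e x) * δ (e x) := mod_cast hbal x
    simp only [_root_.weightedComp, e.symm_apply_apply, map_mul, Complex.conj_ofReal]
    linear_combination f (e x) * starRingEnd ℂ (g x) * hx

end IsBoundedAdjointPair

end WeightedL2

lemma finprod_mem_pow {ι M : Type*} [CommMonoid M] {s : Set ι} (hs : s.Finite) (f : ι → M)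
    (n : ℕ) : (∏ᶠ i ∈ s, f i) ^ n = ∏ᶠ i ∈ s, f i ^ n :=
  (powMonoidHom n).map_finprod_mem f hs

section AffineFunctions

variable {V : Type*} [NormedAddCommGroup V] [InnerProductSpace ℝ V]

lemma coroot_neg (α : V) : coroot (-α) = -coroot α := by
  simp [coroot]

lemma inner_coroot_self {α : V} (hα : α ≠ 0) : ⟪α, coroot α⟫ = 2 := by
  rw [coroot, inner_smul_right, div_mul_cancel₀ _ (inner_self_ne_zero.mpr hα)]

lemma coroot_coroot (α : V) : coroot (coroot α) = α := by
  obtain rfl | hα := eq_or_ne α 0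
  · simp [coroot]
  · have h : ⟪α, α⟫ ≠ 0 := inner_self_ne_zero.mpr hα
    have hcc : ⟪coroot α, coroot α⟫ = 2 / ⟪α, α⟫ * 2 := by
      rw [coroot.eq_1 α, real_inner_smul_left, ← coroot, inner_coroot_self hα]
    rw [coroot.eq_1 (coroot α), hcc, coroot, smul_smul]
    convert one_smul ℝ α using 2
    field_simp

lemma coroot_reflection {α : V} (hα : α ≠ 0) (β : V) :
    coroot (β - ⟪β, coroot α⟫ • α) = coroot β - ⟪α, coroot β⟫ • coroot α := by
  have hαα : ⟪α, α⟫ ≠ 0 := inner_self_ne_zero.mpr hα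
  have hnorm : ⟪β - ⟪β, coroot α⟫ • α, β - ⟪β, coroot α⟫ • α⟫ = ⟪β, β⟫ := by
    simp only [coroot, inner_sub_left, inner_sub_right, real_inner_smul_left,
      real_inner_smul_right, real_inner_comm β α]
    field_simp
    ring
  rw [coroot, hnorm]
  simp only [coroot, real_inner_smul_right, smul_sub, smul_smul, real_inner_comm β α]
  congr 2
  ring

lemma aval_neg (c : ℝ) (a : V × ℤ) (x : V) : aval c (-a) x = -aval c a x := by
  simp only [aval, Prod.fst_neg, Prod.snd_neg, coroot_neg, inner_neg_right, Int.cast_neg]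
  ring

lemma aval_injective {c : ℝ} (hc : c ≠ 0) :
    Function.Injective (aval c : V × ℤ → V → ℝ) := by
  intro a b h
  have hsnd : a.2 = b.2 := by simpa [aval, hc] using congrFun h 0
  have hcoroot : coroot a.1 = coroot b.1 :=
    ext_inner_left ℝ fun x => by simpa [aval, hsnd] using congrFun h x
  exact Prod.ext (by rw [← coroot_coroot a.1, hcoroot, coroot_coroot]) hsnd

lemma aval_sAff (c : ℝ) (a b : V × ℤ) (x : V) :
    aval c b (sAff c a x) = aval c b x - aval c a x * ⟪a.1, coroot b.1⟫ := by
  rw [sAff, aval, inner_sub_left, real_inner_smul_left, sub_add_eq_add_sub, ← aval]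

lemma sAff_involutive (c : ℝ) {a : V × ℤ} (ha : a.1 ≠ 0) :
    Function.Involutive (sAff c a) := by
  intro x
  rw [sAff, aval_sAff, inner_coroot_self ha, sAff, sub_sub, ← add_smul]
  ring_nf
  simp

end AffineFunctions

namespace RootSystemData

variable {V : Type*} [NormedAddCommGroup V] [InnerProductSpace ℝ V] {D : RootSystemData V}

section WeylGroups

variable {c : ℝ}

lemma neg_mem_R0 {α : V} (hα : α ∈ D.R0) : -α ∈ D.R0 := by
  have h := D.reflect_mem α hα α hα
  rwa [inner_coroot_self (D.ne_zero α hα), two_smul, sub_add_cancel_left] at h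

lemma IsAffRoot.neg {a : V × ℤ} (ha : D.IsAffRoot a) : D.IsAffRoot (-a) :=
  neg_mem_R0 ha

lemma IsAffRoot.fst_ne_zero {a : V × ℤ} (ha : D.IsAffRoot a) : a.1 ≠ 0 :=
  D.ne_zero _ ha

lemma IsAffRoot.exists_comp_sAff {a b : V × ℤ} (ha : D.IsAffRoot a) (hb : D.IsAffRoot b) :
    ∃ d, D.IsAffRoot d ∧ ∀ x, aval c d x = aval c b (sAff c a x) := by
  obtain ⟨k, hk⟩ := D.crystallographic b.1 hb a.1 ha
  refine ⟨(b.1 - ⟪b.1, coroot a.1⟫ • a.1, b.2 - a.2 * k), D.reflect_mem _ ha _ hb, fun x => ?_⟩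
  rw [aval_sAff, hk, aval, coroot_reflection ha.fst_ne_zero, inner_sub_right,
    real_inner_smul_right, hk, aval, aval]
  push_cast
  ring

/-- The affine reflection `sAff c a` as a permutation. -/
def affRefl (c : ℝ) {a : V × ℤ} (ha : D.IsAffRoot a) : Equiv.Perm V :=
  (sAff_involutive c ha.fst_ne_zero).toPerm

lemma affRefl_apply {a : V × ℤ} (ha : D.IsAffRoot a) (x : V) :
    affRefl c ha x = sAff c a x := rfl

lemma affRefl_inv {a : V × ℤ} (ha : D.IsAffRoot a) : (affRefl c ha)⁻¹ = affRefl c ha :=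
  (sAff_involutive c ha.fst_ne_zero).toPerm_symm

lemma mem_AffGens_iff {e : Equiv.Perm V} :
    e ∈ D.AffGens c ↔ ∃ (a : V × ℤ) (ha : D.IsAffRoot a), e = affRefl c ha :=
  exists_congr fun _ => ⟨fun h => ⟨h.1, Equiv.ext h.2⟩,
    fun ⟨ha, h⟩ => ⟨ha, fun x => by rw [h, affRefl_apply]⟩⟩

lemma affRefl_mem_WR {a : V × ℤ} (ha : D.IsAffRoot a) : affRefl c ha ∈ D.WR c :=
  Subgroup.subset_closure (mem_AffGens_iff.mpr ⟨a, ha, rfl⟩)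

@[elab_as_elim]
lemma WR_induction {P : Equiv.Perm V → Prop}
    (affRefl : ∀ (a : V × ℤ) (ha : D.IsAffRoot a), P (affRefl c ha)) (one : P 1)
    (mul : ∀ u w, P u → P w → P (u * w)) {w : Equiv.Perm V}
    (hw : w ∈ D.WR c) : P w := by
  refine Subgroup.closure_induction'' (p := fun w _ => P w) (fun e he => ?_) (fun e he => ?_) one
    (fun u w _ _ => mul u w) hw
  all_goals obtain ⟨a, ha, rfl⟩ := mem_AffGens_iff.mp he
  · exact affRefl a ha
  · rw [affRefl_inv]
    exact affRefl a ha

lemma exists_affRoot_comp {w : Equiv.Perm V} (hw : w ∈ D.WR c) :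
    ∀ a, D.IsAffRoot a → ∃ b, D.IsAffRoot b ∧ ∀ x, aval c b x = aval c a (w x) := by
  refine WR_induction (fun b hb a ha => hb.exists_comp_sAff ha)
    (fun a ha => ⟨a, ha, fun _ => rfl⟩) (fun u w hu hw a ha => ?_) hw
  obtain ⟨b, hb, hba⟩ := hu a ha
  obtain ⟨d, hd, hdb⟩ := hw b hb
  exact ⟨d, hd, fun x => by rw [hdb, hba, Equiv.Perm.mul_apply]⟩

lemma exists_bijOn_affRoots (hc : c ≠ 0) {w : Equiv.Perm V} (hw : w ∈ D.WR c) :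
    ∃ s : V × ℤ → V × ℤ, Set.BijOn s {a | D.IsAffRoot a} {a | D.IsAffRoot a} ∧
      ∀ a, D.IsAffRoot a → ∀ x, aval c (s a) x = aval c a (w x) := by
  choose! s hs hsw using exists_affRoot_comp hw
  refine ⟨s, ⟨hs, fun a ha b hb hab => aval_injective hc (funext fun x => ?_), fun a ha => ?_⟩,
    hsw⟩
  · rw [← w.apply_symm_apply x, ← hsw a ha, hab, hsw b hb]
  · obtain ⟨b, hb, hba⟩ := exists_affRoot_comp (inv_mem hw) a ha
    refine ⟨b, hb, aval_injective hc (funext fun x => ?_)⟩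
    rw [hsw b hb, hba, Equiv.Perm.inv_def, w.symm_apply_apply]

lemma W0_le_WR (c : ℝ) : D.W0 ≤ D.WR c := by
  refine Subgroup.closure_mono fun e ⟨α, hα, he⟩ => ⟨(α, 0), hα, fun x => ?_⟩
  simp only [he, sAff, aval, Int.cast_zero, zero_mul, add_zero]

lemma exists_root_inner_coroot_eq {v : Equiv.Perm V} (hv : v ∈ D.W0) {α : V} (hα : α ∈ D.R0) :
    ∃ β ∈ D.R0, ∀ x, ⟪v x, coroot α⟫ = ⟪x, coroot β⟫ := by
  obtain ⟨b, hb, h⟩ := exists_affRoot_comp (W0_le_WR 0 hv) (α, 0) hα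
  exact ⟨b.1, hb, fun x => by simpa [aval] using (h x).symm⟩

lemma exists_linearEquiv_of_mem_W0 {v : Equiv.Perm V} (hv : v ∈ D.W0) :
    ∃ L : V ≃ₗ[ℝ] V, ∀ x, v x = L x := by
  have hle : D.W0 ≤ (MulAction.toPermHom (V ≃ₗ[ℝ] V) V).range := by
    refine (Subgroup.closure_le _).mpr fun e ⟨α, hα, he⟩ => ?_
    have htwo : innerₛₗ ℝ (coroot α) α = 2 := by
      rw [innerₛₗ_apply_apply, real_inner_comm, inner_coroot_self (D.ne_zero α hα)]
    refine ⟨Module.reflection htwo, Equiv.ext fun x => ?_⟩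
    rw [he, real_inner_comm]
    exact Module.reflection_apply x htwo
  obtain ⟨L, rfl⟩ := hle hv
  exact ⟨L, fun _ => rfl⟩

lemma W0_map_neg {v : Equiv.Perm V} (hv : v ∈ D.W0) (x : V) : v (-x) = -v x := by
  obtain ⟨L, hL⟩ := exists_linearEquiv_of_mem_W0 hv
  rw [hL, hL, map_neg]

lemma linPart_mem_W0 {w : Equiv.Perm V} (hw : w ∈ D.WR c) :
    ∃ v ∈ D.W0, ∀ x, linPart w x = v x := by
  refine WR_induction (fun a ha => ?_) ⟨1, one_mem _, fun x => ?_⟩ (fun u w hu hw => ?_) hw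
  · refine ⟨affRefl 0 ha, Subgroup.subset_closure ⟨a.1, ha, fun x => ?_⟩, fun x => ?_⟩
    · simp only [affRefl_apply, sAff, aval, mul_zero, add_zero]
    · simp only [linPart, affRefl_apply, sAff, aval, inner_zero_left, mul_zero, add_zero, zero_add,
        add_smul]
      abel
  · simp [linPart]
  · obtain ⟨u', hu', huu'⟩ := hu
    obtain ⟨w', hw', hww'⟩ := hw
    obtain ⟨L, hL⟩ := exists_linearEquiv_of_mem_W0 hu'
    refine ⟨u' * w', mul_mem hu' hw', fun x => ?_⟩
    calc linPart (u * w) x = linPart u (w x) - linPart u (w 0) := by simp [linPart]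
      _ = u' (linPart w x) := by rw [huu', huu', hL, hL, hL, linPart, map_sub]
      _ = (u' * w') x := by rw [hww', Equiv.Perm.mul_apply]

end WeylGroups

section AlcoveInterior

variable {c : ℝ} {p : V}

/-- `p` lies in the open fundamental alcove. -/
def IsAlcoveInterior (D : RootSystemData V) (c : ℝ) (p : V) : Prop :=
  ∀ a, D.IsAffPos a → 0 < aval c a p

lemma isAffPos_or_isAffNeg {a : V × ℤ} (ha : D.IsAffRoot a) : D.IsAffPos a ∨ D.IsAffNeg a := by
  rcases lt_trichotomy a.2 0 with h | h | h
  · exact .inr ⟨neg_mem_R0 ha, .inl (by simp only; lia)⟩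
  · exact (D.pos_or_neg _ ha).imp (fun hpos => ⟨ha, .inr ⟨h, hpos⟩⟩)
      fun hneg => ⟨neg_mem_R0 ha, .inr ⟨by simpa using h, hneg⟩⟩
  · exact .inl ⟨ha, .inl h⟩

lemma IsAlcoveInterior.aval_neg_of_isAffNeg (hp : D.IsAlcoveInterior c p) {a : V × ℤ}
    (ha : D.IsAffNeg a) : aval c a p < 0 := by
  have h := hp _ ha
  rwa [← Prod.neg_mk, aval_neg, neg_pos] at h

lemma IsAlcoveInterior.isAffPos_iff (hp : D.IsAlcoveInterior c p) {a : V × ℤ}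
    (ha : D.IsAffRoot a) : D.IsAffPos a ↔ 0 < aval c a p :=
  ⟨hp a, fun h => (isAffPos_or_isAffNeg ha).resolve_right
    fun hneg => h.not_gt (hp.aval_neg_of_isAffNeg hneg)⟩

lemma IsAlcoveInterior.isAffNeg_iff (hp : D.IsAlcoveInterior c p) {a : V × ℤ}
    (ha : D.IsAffRoot a) : D.IsAffNeg a ↔ aval c a p < 0 :=
  ⟨hp.aval_neg_of_isAffNeg, fun h => (isAffPos_or_isAffNeg ha).resolve_left
    fun hpos => h.not_gt (hp a hpos)⟩

lemma IsAlcoveInterior.aval_ne_zero (hp : D.IsAlcoveInterior c p) {a : V × ℤ}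
    (ha : D.IsAffRoot a) : aval c a p ≠ 0 :=
  (isAffPos_or_isAffNeg ha).elim (fun h => (hp a h).ne') fun h => (hp.aval_neg_of_isAffNeg h).ne

lemma IsAlcoveInterior.aval_apply_ne_zero (hp : D.IsAlcoveInterior c p) {w : Equiv.Perm V}
    (hw : w ∈ D.WR c) {a : V × ℤ} (ha : D.IsAffRoot a) : aval c a (w p) ≠ 0 := by
  obtain ⟨b, hb, hba⟩ := exists_affRoot_comp hw a ha
  exact hba p ▸ hp.aval_ne_zero hb

lemma span_simpleRoot (D : RootSystemData V) :
    ⊤ ≤ Submodule.span ℝ (Set.range D.simpleRoot) := by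
  have hpos : ∀ α ∈ D.pos, α ∈ Submodule.span ℝ (Set.range D.simpleRoot) := by
    intro α hα
    obtain ⟨k, rfl⟩ := D.pos_natCombo α hα
    exact sum_mem fun j _ => Submodule.smul_mem _ _ (Submodule.subset_span ⟨j, rfl⟩)
  rw [← D.span_top, Submodule.span_le]
  intro α hα
  exact (D.pos_or_neg α hα).elim (hpos α) fun h => neg_neg α ▸ neg_mem (hpos _ h)

lemma exists_inner_simpleRoot_eq_one (D : RootSystemData V) :
    ∃ p, ∀ j, ⟪p, D.simpleRoot j⟫ = 1 := by
  have : FiniteDimensional ℝ V := Module.finite_of_finrank_pos (D.rank_eq ▸ D.n_pos)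
  have : CompleteSpace V := FiniteDimensional.complete ℝ V
  let B := basisOfTopLeSpanOfCardEqFinrank D.simpleRoot D.span_simpleRoot (by simp [D.rank_eq])
  let φ : V →ₗ[ℝ] ℝ := B.constr ℝ fun _ => 1
  refine ⟨(InnerProductSpace.toDual ℝ V).symm φ.toContinuousLinearMap, fun j => ?_⟩
  have hj : D.simpleRoot j = B j := by simp [B]
  rw [InnerProductSpace.toDual_symm_apply, LinearMap.coe_toContinuousLinearMap', hj,
    B.constr_basis]

lemma exists_inner_coroot_pos (D : RootSystemData V) :
    ∃ p, ∀ α ∈ D.pos, 0 < ⟪p, coroot α⟫ := by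
  obtain ⟨p, hp⟩ := D.exists_inner_simpleRoot_eq_one
  refine ⟨p, fun α hα => ?_⟩
  have hα0 : α ≠ 0 := D.ne_zero α (D.pos_subset hα)
  obtain ⟨k, hk⟩ := D.pos_natCombo α hα
  have hheight : ⟪p, α⟫ = ((∑ j, k j : ℕ) : ℝ) := by
    simp [hk, inner_sum, real_inner_smul_right, hp]
  have hne : ∑ j, k j ≠ 0 := fun h0 => hα0 <| hk.trans <| Finset.sum_eq_zero fun j hj => by
    rw [Finset.sum_eq_zero_iff.mp h0 j hj, Nat.cast_zero, zero_smul]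
  rw [coroot, real_inner_smul_right, hheight]
  have hnorm : 0 < ⟪α, α⟫ := real_inner_self_pos.mpr hα0
  positivity

lemma exists_isAlcoveInterior (D : RootSystemData V) (hc : 0 < c) :
    ∃ p, D.IsAlcoveInterior c p := by
  obtain ⟨q, hq⟩ := D.exists_inner_coroot_pos
  obtain ⟨M, hM⟩ := (D.R0.image fun α => -⟪q, coroot α⟫).exists_le
  have hbound : ∀ α ∈ D.R0, -⟪q, coroot α⟫ < |M| + 1 := fun α hα =>
    (hM _ (Finset.mem_image_of_mem _ hα)).trans_lt ((le_abs_self M).trans_lt (lt_add_one _))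
  have ht : 0 < c / (|M| + 1) := by positivity
  refine ⟨(c / (|M| + 1)) • q, fun a ⟨ha, hr⟩ => ?_⟩
  rw [aval, real_inner_smul_left]
  rcases hr with hr | ⟨hr, hpos⟩
  · have hr' : (1 : ℝ) ≤ a.2 := mod_cast hr
    have hlt := mul_lt_mul_of_pos_left (hbound a.1 ha) ht
    rw [div_mul_cancel₀ _ (by positivity)] at hlt
    nlinarith
  · rw [hr, Int.cast_zero, zero_mul, add_zero]
    exact mul_pos ht (hq _ hpos)

end AlcoveInterior

section SeparatingRoots

variable {c : ℝ} {p x y : V}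

/-- The affine roots that are positive at `x` and negative at `y`, that is, the affine
hyperplanes strictly separating `x` from `y`, oriented towards `x`. -/
def sepRoots (D : RootSystemData V) (c : ℝ) (x y : V) : Set (V × ℤ) :=
  {a | D.IsAffRoot a ∧ 0 < aval c a x ∧ aval c a y < 0}

lemma sepRoots_finite (D : RootSystemData V) (hc : 0 < c) (x y : V) :
    (D.sepRoots c x y).Finite := by
  obtain ⟨M, hM⟩ := (D.R0.image fun α => ⟪x, coroot α⟫).exists_le
  obtain ⟨N, hN⟩ := (D.R0.image fun α => -⟪y, coroot α⟫).exists_le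
  refine (D.R0.finite_toSet.prod (Set.finite_Icc ⌊-M / c⌋ ⌈N / c⌉)).subset ?_
  rintro ⟨α, r⟩ ⟨hα, hx, hy⟩
  have hMα : ⟪x, coroot α⟫ ≤ M := hM _ (Finset.mem_image_of_mem _ hα)
  have hNα : -⟪y, coroot α⟫ ≤ N := hN _ (Finset.mem_image_of_mem (fun α => -⟪y, coroot α⟫) hα)
  simp only [aval] at hx hy
  refine ⟨hα, Int.floor_le_iff.mpr ?_, Int.le_ceil_iff.mpr ?_⟩
  · rw [div_lt_iff₀ hc]
    linarith
  · rw [lt_div_iff₀ hc]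
    linarith

lemma RW_eq_sepRoots (hp : D.IsAlcoveInterior c p) {w : Equiv.Perm V} (hw : w ∈ D.WR c) :
    D.RW c w = D.sepRoots c p (w⁻¹ p) := by
  ext a
  constructor
  · rintro ⟨ha, b, hb, hab⟩
    refine ⟨ha.1, hp a ha, ?_⟩
    rw [hab]
    exact hp.aval_neg_of_isAffNeg hb
  · rintro ⟨ha, hpos, hneg⟩
    obtain ⟨b, hb, hba⟩ := exists_affRoot_comp (inv_mem hw) a ha
    exact ⟨(hp.isAffPos_iff ha).mpr hpos, b, (hp.isAffNeg_iff hb).mpr (hba p ▸ hneg),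
      fun x => (hba x).symm⟩

lemma RW_finite (hp : D.IsAlcoveInterior c p) (hc : 0 < c) {w : Equiv.Perm V}
    (hw : w ∈ D.WR c) : (D.RW c w).Finite :=
  RW_eq_sepRoots hp hw ▸ D.sepRoots_finite hc _ _

/-- A root `b ∈ R(w s_a)` is sent to `s_a b` when that is positive, and is itself in `R(w)`
otherwise. -/
lemma len_mul_affRefl_le (hp : D.IsAlcoveInterior c p) (hc : 0 < c) {w : Equiv.Perm V}
    (hw : w ∈ D.WR c) {a : V × ℤ} (haR : D.IsAffRoot a) (ha : a ∈ D.RW c w) :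
    D.len c (w * affRefl c haR) ≤ D.len c w := by
  rw [RW_eq_sepRoots hp hw] at ha
  obtain ⟨-, hap, haw⟩ := ha
  have hs := affRefl_mem_WR (c := c) haR
  obtain ⟨s, hsbij, hsa⟩ := exists_bijOn_affRoots hc.ne' hs
  have hss : ∀ b, D.IsAffRoot b → s (s b) = b := fun b hb =>
    aval_injective hc.ne' <| funext fun x => by
      rw [hsa _ (hsbij.mapsTo hb), hsa b hb]
      exact congrArg _ (sAff_involutive c haR.fst_ne_zero x)
  rw [len, len, RW_eq_sepRoots hp hw, RW_eq_sepRoots hp (mul_mem hw hs), mul_inv_rev, affRefl_inv,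
    Equiv.Perm.mul_apply]
  refine Set.ncard_le_ncard_of_injOn (fun b => if 0 < aval c (s b) p then s b else b) ?_ ?_
    (D.sepRoots_finite hc _ _)
  · rintro b ⟨hb, hbp, hbw⟩
    split_ifs with h
    · exact ⟨hsbij.mapsTo hb, h, by rwa [hsa b hb]⟩
    · rw [hsa b hb, affRefl_apply, aval_sAff, not_lt] at h
      rw [affRefl_apply, aval_sAff] at hbw
      have hk : 0 < ⟪a.1, coroot b.1⟫ := pos_of_mul_pos_right (by linarith) hap.le
      exact ⟨hb, hbp, by linarith [mul_neg_of_neg_of_pos haw hk]⟩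
  · rintro b ⟨hb, hbp, -⟩ d ⟨hd, hdp, -⟩ h
    dsimp only at h
    split_ifs at h with hb' hd' hd'
    · exact hsbij.injOn hb hd h
    · exact absurd (h ▸ (hss b hb).symm ▸ hbp) hd'
    · exact absurd (h ▸ (hss d hd).symm ▸ hdp) hb'
    · exact h

variable {wmin : V → Equiv.Perm V}

lemma IsWmin.aval_nonneg_of_pos (hp : D.IsAlcoveInterior c p) (hw : D.IsWmin c wmin) {a : V × ℤ}
    (ha : D.IsAffRoot a) (h : 0 < aval c a ((wmin x)⁻¹ p)) : 0 ≤ aval c a x := by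
  obtain ⟨hW, hA, -⟩ := hw x
  obtain ⟨b, hb, hba⟩ := exists_affRoot_comp (inv_mem hW) a ha
  have hb0 := hA b ((hp.isAffPos_iff hb).mpr (hba p ▸ h))
  rwa [hba, Equiv.Perm.inv_def, Equiv.symm_apply_apply] at hb0

/-- Otherwise `s_a` would fix `x`, and `wmin x * s_a` would be as short as `wmin x`. -/
lemma IsWmin.not_mem_RW_of_aval_eq_zero (hp : D.IsAlcoveInterior c p) (hc : 0 < c)
    (hw : D.IsWmin c wmin) {a : V × ℤ} (hax : aval c a x = 0) : a ∉ D.RW c (wmin x) := by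
  intro ha
  have haR : D.IsAffRoot a := ha.1.1
  obtain ⟨hW, hA, hmin⟩ := hw x
  have hfix : affRefl c haR x = x := by rw [affRefl_apply, sAff, hax, zero_smul, sub_zero]
  rcases hmin (wmin x * affRefl c haR) (mul_mem hW (affRefl_mem_WR _))
    (by rwa [Equiv.Perm.mul_apply, hfix]) with hlt | heq
  · exact (len_mul_affRefl_le hp hc hW haR ha).not_gt hlt
  · have hp_fix : sAff c a p = p := by
      rw [← affRefl_apply haR, mul_eq_left.mp heq, Equiv.Perm.one_apply]
    rw [sAff, sub_eq_self, smul_eq_zero] at hp_fix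
    exact hp_fix.elim (hp a ha.1).ne' haR.fst_ne_zero

lemma RW_wmin (hp : D.IsAlcoveInterior c p) (hc : 0 < c) (hw : D.IsWmin c wmin) (x : V) :
    D.RW c (wmin x) = D.sepRoots c p x := by
  have hW := (hw x).1
  have hRW := RW_eq_sepRoots hp hW
  ext a
  refine ⟨fun ha => ?_, fun ⟨ha, hap, hax⟩ => ?_⟩
  · obtain ⟨haR, hap, haw⟩ := hRW ▸ ha
    refine ⟨haR, hap, lt_of_le_of_ne ?_ fun h0 => hw.not_mem_RW_of_aval_eq_zero hp hc h0 ha⟩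
    have h := hw.aval_nonneg_of_pos hp (x := x) haR.neg
    rw [aval_neg, aval_neg] at h
    linarith [h (by linarith)]
  · refine hRW ▸ ⟨ha, hap, (hp.aval_apply_ne_zero (inv_mem hW) ha).lt_or_gt.resolve_right ?_⟩
    exact fun h => hax.not_ge (hw.aval_nonneg_of_pos hp ha h)

lemma IsWmin.aval_inv_pos_iff (hp : D.IsAlcoveInterior c p) (hc : 0 < c)
    (hw : D.IsWmin c wmin) {a : V × ℤ} (ha : D.IsAffRoot a) (x : V) :
    0 < aval c a ((wmin x)⁻¹ p) ↔ 0 < aval c a x ∨ aval c a x = 0 ∧ 0 < aval c a p := by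
  have hmem : ∀ b, b ∈ D.sepRoots c p ((wmin x)⁻¹ p) ↔ b ∈ D.sepRoots c p x := by
    rw [← RW_eq_sepRoots hp (hw x).1, RW_wmin hp hc hw x]
    exact fun _ => Iff.rfl
  have hne := hp.aval_apply_ne_zero (inv_mem (hw x).1) ha
  have h := hmem a
  have hneg := hmem (-a)
  simp only [sepRoots, Set.mem_ofPred_eq, ha, ha.neg, true_and, aval_neg, Left.neg_pos_iff,
    Left.neg_neg_iff] at h hneg
  rcases (hp.aval_ne_zero ha).lt_or_gt with hap | hap
  · simp only [hap, true_and] at hneg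
    simp only [hneg, hap.not_gt, and_false, or_false]
  · simp only [hap, true_and] at h
    grind

lemma RW_wmin_mul_sdiff (hp : D.IsAlcoveInterior c p) (hc : 0 < c) (hw : D.IsWmin c wmin)
    (x y : V) :
    D.RW c (wmin (wmin x y) * wmin x) \ D.RW c (wmin x) = D.RW c (wmin y) \ D.RW c (wmin x) := by
  have hX := (hw x).1
  have hU := (hw (wmin x y)).1
  ext a
  refine and_congr_left fun hax => ?_
  rw [RW_eq_sepRoots hp (mul_mem hU hX), RW_wmin hp hc hw y]
  refine and_congr_right fun ha => and_congr_right fun hap => ?_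
  obtain ⟨b, hb, hba⟩ := exists_affRoot_comp (inv_mem hX) a ha
  have hawp : 0 < aval c a ((wmin x)⁻¹ p) :=
    (hp.aval_apply_ne_zero (inv_mem hX) ha).lt_or_gt.resolve_left fun h =>
      hax (RW_eq_sepRoots hp hX ▸ ⟨ha, hap, h⟩)
  have hby : aval c b (wmin x y) = aval c a y := by
    rw [hba, Equiv.Perm.inv_def, Equiv.symm_apply_apply]
  have h := hw.aval_inv_pos_iff hp hc hb (wmin x y)
  have hne := hp.aval_apply_ne_zero (inv_mem hU) hb
  rw [hby, hba p, hba] at h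
  rw [hba] at hne
  rw [mul_inv_rev, Equiv.Perm.mul_apply]
  grind

end SeparatingRoots

section Multiplicities

variable {c : ℝ} {p x y : V}

section Products

variable {M : Type*} {τ : V × ℤ → M}

/-- `τ` is constant on the orbits of the affine Weyl group in the set of affine roots. -/
def IsWeylInvariant (D : RootSystemData V) (c : ℝ) (τ : V × ℤ → M) : Prop :=
  ∀ w ∈ D.WR c, ∀ a b, D.IsAffRoot a → D.IsAffRoot b → mapsRoot c w a b → τ a = τ b

lemma IsWeylInvariant.apply_neg (hτ : D.IsWeylInvariant c τ) {a : V × ℤ} (ha : D.IsAffRoot a) :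
    τ (-a) = τ a := by
  refine (hτ _ (affRefl_mem_WR ha) a (-a) ha ha.neg fun x => ?_).symm
  rw [affRefl_inv, affRefl_apply, aval_sAff, inner_coroot_self ha.fst_ne_zero, aval_neg]
  ring

lemma IsWeylInvariant.finprod_sepRoots_apply [CommMonoid M] (hτ : D.IsWeylInvariant c τ)
    (hc : c ≠ 0) {w : Equiv.Perm V} (hw : w ∈ D.WR c) (x y : V) :
    ∏ᶠ a ∈ D.sepRoots c (w x) (w y), τ a = ∏ᶠ a ∈ D.sepRoots c x y, τ a := by
  obtain ⟨s, hs, hsw⟩ := exists_bijOn_affRoots hc hw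
  have hbij := hs.subset_right (r := D.sepRoots c x y) fun a ha => ha.1
  have hdom : {a | D.IsAffRoot a} ∩ s ⁻¹' D.sepRoots c x y = D.sepRoots c (w x) (w y) := by
    ext a
    refine and_congr_right fun ha => ?_
    rw [Set.mem_preimage, sepRoots, Set.mem_ofPred_eq, hsw a ha, hsw a ha,
      and_iff_right (show D.IsAffRoot (s a) from hs.mapsTo ha)]
  rw [hdom] at hbij
  refine finprod_mem_eq_of_bijOn s hbij fun a ha => ?_
  refine hτ w⁻¹ (inv_mem hw) a (s a) ha.1 (hs.mapsTo ha.1) fun z => ?_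
  rw [inv_inv, hsw a ha.1]

lemma sepRoots_eq_union (hp : ∀ a, D.IsAffRoot a → aval c a p ≠ 0)
    (hx : ∀ a, D.IsAffRoot a → aval c a x ≠ 0) (hy : ∀ a, D.IsAffRoot a → aval c a y ≠ 0) :
    D.sepRoots c x y = (D.sepRoots c p y \ D.sepRoots c p x) ∪
      Neg.neg '' (D.sepRoots c p x \ D.sepRoots c p y) := by
  ext a
  rw [Set.image_neg_eq_neg, Set.mem_union, Set.mem_neg]
  by_cases ha : D.IsAffRoot a
  · have hap := hp a ha
    have hax := hx a ha
    have hay := hy a ha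
    simp only [sepRoots, Set.mem_sdiff, Set.mem_ofPred_eq, ha, ha.neg, true_and, aval_neg,
      Left.neg_pos_iff, Left.neg_neg_iff]
    grind
  · have hna : ¬D.IsAffRoot (-a) := fun h => ha (neg_neg a ▸ h.neg)
    simp only [sepRoots, Set.mem_sdiff, Set.mem_ofPred_eq, ha, hna, false_and, or_self]

lemma IsWeylInvariant.finprod_sepRoots [CommMonoid M] (hτ : D.IsWeylInvariant c τ) (hc : 0 < c)
    (hp : ∀ a, D.IsAffRoot a → aval c a p ≠ 0) (hx : ∀ a, D.IsAffRoot a → aval c a x ≠ 0)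
    (hy : ∀ a, D.IsAffRoot a → aval c a y ≠ 0) :
    ∏ᶠ a ∈ D.sepRoots c x y, τ a =
      (∏ᶠ a ∈ D.sepRoots c p y \ D.sepRoots c p x, τ a) *
        ∏ᶠ a ∈ D.sepRoots c p x \ D.sepRoots c p y, τ a := by
  have hfin (z z' : V) : (D.sepRoots c p z \ D.sepRoots c p z').Finite :=
    (D.sepRoots_finite hc p z).sdiff
  have hdisj : Disjoint (D.sepRoots c p y \ D.sepRoots c p x)
      (Neg.neg '' (D.sepRoots c p x \ D.sepRoots c p y)) := by
    rw [Set.disjoint_left]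
    rintro _ ⟨⟨-, hpos, -⟩, -⟩ ⟨a, ⟨⟨-, hpos', -⟩, -⟩, rfl⟩
    rw [aval_neg] at hpos
    linarith
  rw [sepRoots_eq_union hp hx hy, finprod_mem_union hdisj (hfin _ _) ((hfin _ _).image _),
    finprod_mem_image neg_injective.injOn]
  exact congrArg _ (finprod_mem_congr rfl fun a ha => hτ.apply_neg ha.1.1)

end Products

variable {wmin : V → Equiv.Perm V}

section Cocycle

variable {R : Type*} [Field R] {τ : V × ℤ → R} {u w : Equiv.Perm V}

lemma tauw_eq_mul_of_mul (hp : D.IsAlcoveInterior c p) (hc : 0 < c)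
    (hτ : D.IsWeylInvariant c τ) (hu : u ∈ D.WR c) (hw : w ∈ D.WR c) :
    D.tauw c τ u = (∏ᶠ a ∈ D.RW c (u * w) \ D.RW c w, τ a) *
      ∏ᶠ a ∈ D.RW c w \ D.RW c (u * w), τ a := by
  have huw := mul_mem hu hw
  rw [RW_eq_sepRoots hp huw, RW_eq_sepRoots hp hw, ← hτ.finprod_sepRoots hc
    (fun _ => hp.aval_ne_zero) (fun _ => hp.aval_apply_ne_zero (inv_mem hw))
    (fun _ => hp.aval_apply_ne_zero (inv_mem huw)), ← hτ.finprod_sepRoots_apply hc.ne' hw,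
    tauw, RW_eq_sepRoots hp hu, mul_inv_rev, Equiv.Perm.mul_apply, Equiv.Perm.inv_def w,
    w.apply_symm_apply, w.apply_symm_apply]

lemma tauw_mul_tauw_mul (hp : D.IsAlcoveInterior c p) (hc : 0 < c)
    (hτ : D.IsWeylInvariant c τ) (hu : u ∈ D.WR c) (hw : w ∈ D.WR c) :
    D.tauw c τ u * D.tauw c τ (u * w) =
      (∏ᶠ a ∈ D.RW c (u * w) \ D.RW c w, τ a ^ 2) * D.tauw c τ w := by
  have hfin : (D.RW c (u * w)).Finite := RW_finite hp hc (mul_mem hu hw)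
  rw [tauw_eq_mul_of_mul hp hc hτ hu hw, tauw, tauw,
    ← finprod_mem_inter_mul_sdiff (D.RW c w) hfin,
    ← finprod_mem_inter_mul_sdiff (D.RW c (u * w)) (RW_finite hp hc hw),
    ← finprod_mem_pow hfin.sdiff, Set.inter_comm (D.RW c w)]
  ring

lemma tauw_ne_zero (hτ : ∀ a, D.IsAffRoot a → τ a ≠ 0) (w : Equiv.Perm V) :
    D.tauw c τ w ≠ 0 :=
  finprod_mem_induction (· ≠ 0) one_ne_zero (fun _ _ => mul_ne_zero) fun a ha => hτ a ha.1.1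

lemma acoef_eq_finprod (hc : 0 < c) (hw : D.IsWmin c wmin) (hτ : D.IsWeylInvariant c τ)
    (hτ0 : ∀ a, D.IsAffRoot a → τ a ≠ 0) (x ν : V) :
    D.acoef c τ wmin x ν = ∏ᶠ a ∈ D.RW c (wmin (x - ν)) \ D.RW c (wmin x), τ a ^ 2 := by
  obtain ⟨p, hp⟩ := D.exists_isAlcoveInterior hc
  rw [acoef, tauw_mul_tauw_mul hp hc hτ (hw _).1 (hw x).1, RW_wmin_mul_sdiff hp hc hw,
    mul_inv_cancel_right₀ (tauw_ne_zero hτ0 _)]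

end Cocycle

variable {τ : V × ℤ → ℝ}

lemma acoef_mul_deltaW (hc : 0 < c) (hw : D.IsWmin c wmin) (hτ : D.IsWeylInvariant c τ)
    (hτ0 : ∀ a, D.IsAffRoot a → τ a ≠ 0) (x ν : V) :
    D.acoef c τ wmin x ν * deltaW D c τ wmin x =
      ∏ᶠ a ∈ D.RW c (wmin x) ∪ D.RW c (wmin (x - ν)), τ a ^ 2 := by
  obtain ⟨p, hp⟩ := D.exists_isAlcoveInterior hc
  have hfin (z : V) : (D.RW c (wmin z)).Finite := RW_finite hp hc (hw z).1
  rw [acoef_eq_finprod hc hw hτ hτ0, deltaW, tauw, finprod_mem_pow (hfin x), ← Set.union_sdiff_self,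
    finprod_mem_union disjoint_sdiff_self_right (hfin x) (hfin _).sdiff, mul_comm]

lemma acoef_mul_deltaW_symm (hc : 0 < c) (hw : D.IsWmin c wmin) (hτ : D.IsWeylInvariant c τ)
    (hτ0 : ∀ a, D.IsAffRoot a → τ a ≠ 0) (x ν : V) :
    D.acoef c τ wmin x ν * deltaW D c τ wmin x =
      D.acoef c τ wmin (x - ν) (-ν) * deltaW D c τ wmin (x - ν) := by
  rw [acoef_mul_deltaW hc hw hτ hτ0, acoef_mul_deltaW hc hw hτ hτ0, sub_neg_eq_add,
    sub_add_cancel, Set.union_comm]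

lemma finprod_sq_mem_Ioc (hτ : ∀ a, D.IsAffRoot a → τ a ^ 2 ∈ Set.Ioc 0 1) {s : Set (V × ℤ)}
    (hs : ∀ a ∈ s, D.IsAffRoot a) : ∏ᶠ a ∈ s, τ a ^ 2 ∈ Set.Ioc 0 1 :=
  finprod_mem_induction (· ∈ Set.Ioc (0 : ℝ) 1) ⟨one_pos, le_rfl⟩
    (fun _ _ h h' => ⟨mul_pos h.1 h'.1, mul_le_one₀ h.2 h'.1.le h'.2⟩) fun a ha => hτ a (hs a ha)

lemma acoef_mem_Icc (hc : 0 < c) (hw : D.IsWmin c wmin) (hτ : D.IsWeylInvariant c τ)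
    (hτsq : ∀ a, D.IsAffRoot a → τ a ^ 2 ∈ Set.Ioc 0 1) (x ν : V) :
    D.acoef c τ wmin x ν ∈ Set.Icc 0 1 := by
  have hτ0 : ∀ a, D.IsAffRoot a → τ a ≠ 0 := fun a ha => (sq_pos_iff.mp (hτsq a ha).1)
  rw [acoef_eq_finprod hc hw hτ hτ0]
  exact Set.Ioc_subset_Icc_self (finprod_sq_mem_Ioc hτsq fun a ha => ha.1.1.1)

lemma tauw_sq_le_one (hc : 0 < c) (hτsq : ∀ a, D.IsAffRoot a → τ a ^ 2 ∈ Set.Ioc 0 1)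
    {w : Equiv.Perm V} (hw : w ∈ D.WR c) : D.tauw c τ w ^ 2 ≤ 1 := by
  obtain ⟨p, hp⟩ := D.exists_isAlcoveInterior hc
  rw [tauw, finprod_mem_pow (RW_finite hp hc hw)]
  exact (finprod_sq_mem_Ioc hτsq fun a ha => ha.1.1).2

end Multiplicities

section Orbits

variable {ω ν x : V}

lemma subset_weightLattice (D : RootSystemData V) : (D.R0 : Set V) ⊆ D.weightLattice :=
  fun β hβ α hα => D.crystallographic α hα β hβ

lemma W0_apply_mem_weightLattice {v : Equiv.Perm V} (hv : v ∈ D.W0)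
    (hx : x ∈ D.weightLattice) : v x ∈ D.weightLattice := by
  intro α hα
  obtain ⟨β, hβ, h⟩ := exists_root_inner_coroot_eq hv hα
  exact h x ▸ hx β hβ

lemma sub_mem_weightLattice_iff (hν : ν ∈ D.weightLattice) :
    x - ν ∈ D.weightLattice ↔ x ∈ D.weightLattice := by
  refine forall₂_congr fun α hα => ?_
  obtain ⟨l, hl⟩ := hν α hα
  simp only [inner_sub_left, hl, sub_eq_iff_eq_add]
  refine ⟨fun ⟨k, hk⟩ => ⟨k + l, by rw [hk, Int.cast_add]⟩, fun ⟨k, hk⟩ => ⟨k - l, ?_⟩⟩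
  rw [hk, Int.cast_sub, sub_add_cancel]

/-- All pairings of `ν` with coroots lie in `[-1, 1]`. The nonzero weights with this property are
the elements of the `W₀`-orbits of the minuscule weights. -/
def HasSmallPairings (D : RootSystemData V) (ν : V) : Prop :=
  ∀ α ∈ D.R0, |⟪ν, coroot α⟫| ≤ 1

lemma HasSmallPairings.W0_apply (h : D.HasSmallPairings ν) {v : Equiv.Perm V}
    (hv : v ∈ D.W0) : D.HasSmallPairings (v ν) := by
  intro α hα
  obtain ⟨β, hβ, hαβ⟩ := exists_root_inner_coroot_eq hv hα
  exact hαβ ν ▸ h β hβ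

lemma HasSmallPairings.neg (h : D.HasSmallPairings ν) : D.HasSmallPairings (-ν) := by
  intro α hα
  rw [inner_neg_left, abs_neg]
  exact h α hα

lemma HasSmallPairings.notMem_R0 (h : D.HasSmallPairings ν) : ν ∉ D.R0 := by
  intro hν
  have h2 := h ν hν
  rw [inner_coroot_self (D.ne_zero ν hν)] at h2
  norm_num at h2

lemma IsMinuscule.hasSmallPairings (h : D.IsMinuscule ω) : D.HasSmallPairings ω := by
  have hpos : ∀ α ∈ D.pos, |⟪ω, coroot α⟫| ≤ 1 := fun α hα =>
    (abs_of_nonneg (h.2.1 α hα)).trans_le (h.2.2.2 α hα)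
  intro α hα
  refine (D.pos_or_neg α hα).elim (hpos α) fun hneg => ?_
  simpa only [coroot_neg, inner_neg_right, abs_neg] using hpos _ hneg

lemma exists_W0_apply_neg_eq_iff {v : Equiv.Perm V} (hv : v ∈ D.W0) :
    (∃ w ∈ D.W0, w (-(v ω)) = ν) ↔ ∃ w ∈ D.W0, w ω = -ν := by
  constructor
  · rintro ⟨w, hw, rfl⟩
    exact ⟨w * v, mul_mem hw hv, by rw [W0_map_neg hw, neg_neg, Equiv.Perm.mul_apply]⟩
  · rintro ⟨w, hw, h⟩
    have hwv := mul_mem hw (inv_mem hv)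
    exact ⟨w * v⁻¹, hwv, by rw [W0_map_neg hwv, Equiv.Perm.mul_apply, Equiv.Perm.inv_def,
      v.symm_apply_apply, h, neg_neg]⟩

lemma exists_W0_apply_eq_neg (hω : ω ∈ D.R0) : ∃ w ∈ D.W0, w ω = -ω := by
  have hr : D.IsAffRoot (ω, 0) := hω
  refine ⟨affRefl 0 hr, Subgroup.subset_closure ⟨ω, hω, fun x => ?_⟩, ?_⟩
  · simp only [affRefl_apply, sAff, aval, mul_zero, add_zero]
  · rw [affRefl_apply, sAff, aval, inner_coroot_self hr.fst_ne_zero, mul_zero, add_zero, two_smul,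
      sub_add_cancel_left]

end Orbits

section DiagonalCoefficients

variable {c : ℝ} {wmin : V → Equiv.Perm V} {τ : V × ℤ → ℝ} {ν : V}

lemma theta_le_card (hc : c ≠ 0) (wmin : V → Equiv.Perm V) (μ : V) :
    D.theta c wmin μ ≤ D.R0.card := by
  rw [theta, ← Set.ncard_coe_finset D.R0]
  refine Set.ncard_le_ncard_of_injOn Prod.fst (fun b hb => hb.1.1.1) ?_ D.R0.finite_toSet
  rintro ⟨α, r⟩ ⟨-, hr⟩ ⟨_, s⟩ ⟨-, hs⟩ rfl
  simp only [aval] at hr hs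
  have hrs : (r : ℝ) = s := mul_right_cancel₀ hc (by linarith)
  exact Prod.ext rfl (mod_cast hrs)

lemma exists_abs_ccoef_le (hc : c ≠ 0) (τ : V × ℤ → ℝ) (wmin : V → Equiv.Perm V) (η : V) :
    ∃ B, ∀ x, |D.ccoef c τ wmin x η| ≤ B := by
  refine ⟨D.R0.card * |D.etau τ η| * ∑ k ∈ Finset.Icc (-1 : ℤ) 1, |D.hvee τ ^ k|, fun x => ?_⟩
  have hsgn : -sgnZ ⟪x, coroot η⟫ ∈ Finset.Icc (-1) 1 := by
    rw [sgnZ]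
    split_ifs <;> decide
  rw [ccoef, abs_mul, abs_mul, Nat.abs_cast]
  gcongr
  · exact theta_le_card hc wmin _
  · exact Finset.single_le_sum (f := fun k => |D.hvee τ ^ k|) (fun _ _ => abs_nonneg _) hsgn

lemma exists_abs_bcoef_le (hc : 0 < c) (hw : D.IsWmin c wmin)
    (hτsq : ∀ a, D.IsAffRoot a → τ a ^ 2 ∈ Set.Ioc 0 1) {S : Finset V}
    (hS : ∀ v ∈ D.W0, ∀ ν ∈ S, v ν ∈ S) :
    ∃ B, ∀ x, ∀ ν ∈ S, |D.bcoef c τ wmin x ν| ≤ B := by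
  choose B hB using D.exists_abs_ccoef_le hc.ne' τ wmin
  obtain ⟨M, hM⟩ := (S.image B).exists_le
  refine ⟨max 1 M, fun x ν hν => ?_⟩
  rw [bcoef]
  split_ifs
  · rw [mul_one, abs_of_nonneg (sq_nonneg _)]
    exact le_max_of_le_left (tauw_sq_le_one hc hτsq (hw _).1)
  · rw [mul_zero, abs_zero]
    exact le_max_of_le_left zero_le_one
  · obtain ⟨v, hv, hlin⟩ := linPart_mem_W0 (hw x).1
    rw [hlin]
    exact le_max_of_le_right ((hB _ _).trans (hM _ (Finset.mem_image_of_mem B (hS v hv ν hν))))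

lemma exists_abs_sum_bcoef_le (hc : 0 < c) (hw : D.IsWmin c wmin)
    (hτsq : ∀ a, D.IsAffRoot a → τ a ^ 2 ∈ Set.Ioc 0 1) {S : Finset V}
    (hS : ∀ v ∈ D.W0, ∀ ν ∈ S, v ν ∈ S) :
    ∃ B, ∀ x, |∑ ν ∈ S, D.bcoef c τ wmin x ν| ≤ B := by
  obtain ⟨B, hB⟩ := exists_abs_bcoef_le hc hw hτsq hS
  exact ⟨S.card • B, fun x =>
    (Finset.abs_sum_le_sum_abs _ _).trans (Finset.sum_le_card_nsmul S _ B (hB x))⟩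

/-- A root counted by `θ` is nonnegative at `x` and takes the value `-2` at `x - ν`, but translation
by `ν` changes its value by at most `1`. -/
lemma HasSmallPairings.theta_eq_zero (hν : D.HasSmallPairings ν) {x : V}
    (hx : x ∈ D.alcove c) (wmin : V → Equiv.Perm V) : D.theta c wmin (x - ν) = 0 := by
  refine (congrArg Set.ncard (Set.eq_empty_of_forall_notMem ?_)).trans (Set.ncard_empty _)
  intro b ⟨hb, hb2⟩
  have hpairing := hν b.1 hb.1.1
  have hbx := hx b hb.1
  rw [aval, inner_sub_left, sub_add_eq_add_sub, ← aval] at hb2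
  linarith [le_abs_self ⟪ν, coroot b.1⟫]

lemma HasSmallPairings.bcoef_eq_zero (hν : D.HasSmallPairings ν) (hw : D.IsWmin c wmin)
    (τ : V × ℤ → ℝ) (x : V) : D.bcoef c τ wmin x ν = 0 := by
  rw [bcoef]
  split_ifs with h hneg
  · exact absurd hneg.1 hν.neg.notMem_R0
  · exact mul_zero _
  · obtain ⟨v, hv, hlin⟩ := linPart_mem_W0 (hw x).1
    rw [ccoef, hlin, (hν.W0_apply hv).theta_eq_zero (hw x).2.1, Nat.cast_zero, zero_mul, zero_mul]

lemma sum_bcoef_eq_of_neg_mem (hw : D.IsWmin c wmin) (τ : V × ℤ → ℝ) {ω : V}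
    (hω : D.HasSmallPairings ω ∨ ω ∈ D.R0) {S S' : Finset V}
    (hS : ∀ ν, ν ∈ S ↔ ∃ w ∈ D.W0, w ω = ν) (hS' : ∀ ν, ν ∈ S' ↔ -ν ∈ S) (x : V) :
    ∑ ν ∈ S', D.bcoef c τ wmin x ν = ∑ ν ∈ S, D.bcoef c τ wmin x ν := by
  rcases hω with hω | hω
  · have hsmall : ∀ ν ∈ S, D.HasSmallPairings ν := fun ν hν => by
      obtain ⟨w, hw, rfl⟩ := (hS ν).mp hν
      exact hω.W0_apply hw
    have hsmall' : ∀ ν ∈ S', D.HasSmallPairings ν := fun ν hν =>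
      neg_neg ν ▸ (hsmall _ ((hS' ν).mp hν)).neg
    rw [Finset.sum_eq_zero fun ν hν => (hsmall ν hν).bcoef_eq_zero hw τ x,
      Finset.sum_eq_zero fun ν hν => (hsmall' ν hν).bcoef_eq_zero hw τ x]
  · obtain ⟨r, hr, hrω⟩ := exists_W0_apply_eq_neg hω
    have hneg : ∀ ν ∈ S, -ν ∈ S := fun ν hν => by
      obtain ⟨w, hw, rfl⟩ := (hS ν).mp hν
      exact (hS _).mpr ⟨w * r, mul_mem hw hr, by rw [Equiv.Perm.mul_apply, hrω, W0_map_neg hw]⟩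
    have hSS' : S' = S := Finset.ext fun ν =>
      (hS' ν).trans ⟨fun h => neg_neg ν ▸ hneg _ h, hneg ν⟩
    rw [hSS']

end DiagonalCoefficients

section Laplacian

variable {c : ℝ} {wmin : V → Equiv.Perm V} {τ : V × ℤ → ℝ} {f g : V → ℂ}

/-- The weight `δ` extended by zero from `P` to `V`, so that `ℓ²(P, δ)` becomes a weighted
`ℓ²`-space on all of `V`. -/
def latticeWeight (D : RootSystemData V) (c : ℝ) (τ : V × ℤ → ℝ) (wmin : V → Equiv.Perm V) :
    V → ℝ :=
  D.weightLattice.indicator (deltaW D c τ wmin)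

lemma latticeWeight_nonneg : 0 ≤ D.latticeWeight c τ wmin :=
  Set.indicator_nonneg fun _ _ => sq_nonneg _

lemma norm_sq_mul_latticeWeight (f : V → ℂ) :
    (fun x => ‖f x‖ ^ 2 * D.latticeWeight c τ wmin x) =
      D.weightLattice.indicator fun x => ‖f x‖ ^ 2 * deltaW D c τ wmin x :=
  funext fun _ => (Set.indicator_mul_right _ (fun x => ‖f x‖ ^ 2) _).symm

lemma memL2_iff : MemL2 D c τ wmin f ↔ MemWeightedL2 (D.latticeWeight c τ wmin) f := by
  rw [MemWeightedL2, norm_sq_mul_latticeWeight, ← summable_subtype_iff_indicator]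
  exact Iff.rfl

lemma normSqDelta_eq (f : V → ℂ) :
    normSqDelta D c τ wmin f = weightedNormSq (D.latticeWeight c τ wmin) f := by
  rw [weightedNormSq, norm_sq_mul_latticeWeight]
  exact tsum_subtype D.weightLattice fun x => ‖f x‖ ^ 2 * deltaW D c τ wmin x

lemma innerDelta_eq (f g : V → ℂ) :
    innerDelta D c τ wmin f g = weightedInner (D.latticeWeight c τ wmin) f g := by
  refine (tsum_subtype D.weightLattice fun x =>
    f x * starRingEnd ℂ (g x) * (deltaW D c τ wmin x : ℂ)).trans (tsum_congr fun x => ?_)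
  by_cases hx : x ∈ D.weightLattice <;> simp [latticeWeight, hx]

lemma acoef_mul_latticeWeight (hc : 0 < c) (hw : D.IsWmin c wmin) (hτ : D.IsWeylInvariant c τ)
    (hτ0 : ∀ a, D.IsAffRoot a → τ a ≠ 0) {ν : V} (hν : ν ∈ D.weightLattice) (x : V) :
    D.acoef c τ wmin x ν * D.latticeWeight c τ wmin x =
      D.acoef c τ wmin (x - ν) (-ν) * D.latticeWeight c τ wmin (x - ν) := by
  by_cases hx : x ∈ D.weightLattice
  · rw [latticeWeight, Set.indicator_of_mem hx,
      Set.indicator_of_mem ((sub_mem_weightLattice_iff hν).mpr hx)]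
    exact acoef_mul_deltaW_symm hc hw hτ hτ0 x ν
  · rw [latticeWeight, Set.indicator_of_notMem hx,
      Set.indicator_of_notMem (mt (sub_mem_weightLattice_iff hν).mp hx), mul_zero, mul_zero]

lemma Lop_eq_sum_add (S : Finset V) :
    Lop D c τ wmin S = ∑ ν ∈ S, weightedComp (D.acoef c τ wmin · ν) (Equiv.subRight ν) +
      fun f x => (((∑ ν ∈ S, D.bcoef c τ wmin x ν) * (1 - (D.tauZero τ)⁻¹ ^ 2) : ℝ) : ℂ) * f x := by
  ext f x
  simp only [Lop, Finset.sum_add_distrib, Pi.add_apply, Finset.sum_apply, weightedComp,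
    Equiv.subRight_apply, Finset.sum_mul]
  push_cast
  rw [← Finset.sum_mul, ← Finset.sum_mul]

lemma isBoundedAdjointPair_Lop (hc : 0 < c) (hw : D.IsWmin c wmin)
    (hτ : D.IsWeylInvariant c τ) (hτsq : ∀ a, D.IsAffRoot a → τ a ^ 2 ∈ Set.Ioc 0 1)
    {S S' : Finset V} (hS : (S : Set V) ⊆ D.weightLattice) (hS' : ∀ ν, ν ∈ S' ↔ -ν ∈ S)
    (hsymm : ∀ x, ∑ ν ∈ S', D.bcoef c τ wmin x ν = ∑ ν ∈ S, D.bcoef c τ wmin x ν)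
    (hbdd : ∃ B, ∀ x, |∑ ν ∈ S, D.bcoef c τ wmin x ν| ≤ B) :
    IsBoundedAdjointPair (D.latticeWeight c τ wmin) (Lop D c τ wmin S) (Lop D c τ wmin S') := by
  have hτ0 : ∀ a, D.IsAffRoot a → τ a ≠ 0 := fun a ha => sq_pos_iff.mp (hτsq a ha).1
  obtain ⟨B, hB⟩ := hbdd
  rw [Lop_eq_sum_add, Lop_eq_sum_add, sum_weightedComp_subRight_of_neg_mem hS']
  simp only [hsymm]
  refine .add latticeWeight_nonneg (.sum latticeWeight_nonneg fun ν hν => ?_)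
    (.multiplier latticeWeight_nonneg (B := B * |1 - (D.tauZero τ)⁻¹ ^ 2|) fun x => ?_)
  · exact .weightedComp latticeWeight_nonneg _ (fun x => acoef_mem_Icc hc hw hτ hτsq x ν)
      (fun x => acoef_mem_Icc hc hw hτ hτsq x (-ν))
      (acoef_mul_latticeWeight hc hw hτ hτ0 (hS hν))
  · rw [abs_mul]
    exact mul_le_mul_of_nonneg_right (hB x) (abs_nonneg _)

end Laplacian

end RootSystemData

open RootSystemData in
theorem statement17_general {V : Type*} [NormedAddCommGroup V] [InnerProductSpace ℝ V]
    (D : RootSystemData V) {c : ℝ} (hc : 0 < c)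
    {τ : V × ℤ → ℝ} (hτsq : ∀ a, D.IsAffRoot a → τ a ^ 2 ∈ Set.Ioc 0 1)
    (hτ : D.IsWeylInvariant c τ) {wmin : V → Equiv.Perm V} (hw : D.IsWmin c wmin)
    {ω : V} (hω : ω ∈ D.weightLattice ∧ D.HasSmallPairings ω ∨ ω ∈ D.R0)
    {v : Equiv.Perm V} (hv : v ∈ D.W0) {orb orbStar : Finset V}
    (horb : ∀ ν, ν ∈ orb ↔ ∃ w ∈ D.W0, w ω = ν)
    (horbStar : ∀ ν, ν ∈ orbStar ↔ ∃ w ∈ D.W0, w (-(v ω)) = ν) :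
    (∀ x ν, D.acoef c τ wmin x ν * deltaW D c τ wmin x =
      D.acoef c τ wmin (x - ν) (-ν) * deltaW D c τ wmin (x - ν)) ∧
    (∀ f, MemL2 D c τ wmin f → MemL2 D c τ wmin (Lop D c τ wmin orb f)) ∧
    (∃ C, ∀ f, MemL2 D c τ wmin f →
      normSqDelta D c τ wmin (Lop D c τ wmin orb f) ≤ C * normSqDelta D c τ wmin f) ∧
    ∀ f g, MemL2 D c τ wmin f → MemL2 D c τ wmin g →
      innerDelta D c τ wmin (Lop D c τ wmin orb f) g =
        innerDelta D c τ wmin f (Lop D c τ wmin orbStar g) := by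
  have hωP : ω ∈ D.weightLattice := hω.elim And.left fun h => D.subset_weightLattice h
  have hP : (orb : Set V) ⊆ D.weightLattice := fun ν hν => by
    obtain ⟨w, hw, rfl⟩ := (horb ν).mp hν
    exact W0_apply_mem_weightLattice hw hωP
  have hneg : ∀ ν, ν ∈ orbStar ↔ -ν ∈ orb := fun ν => by
    rw [horbStar, horb, exists_W0_apply_neg_eq_iff hv]
  have hstable : ∀ u ∈ D.W0, ∀ ν ∈ orb, u ν ∈ orb := fun u hu ν hν => by
    obtain ⟨w, hw, rfl⟩ := (horb ν).mp hν
    exact (horb _).mpr ⟨u * w, mul_mem hu hw, rfl⟩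
  have hL := isBoundedAdjointPair_Lop hc hw hτ hτsq hP hneg
    (sum_bcoef_eq_of_neg_mem hw τ (hω.imp_left And.right) horb hneg)
    (exists_abs_sum_bcoef_le hc hw hτsq hstable)
  simp only [memL2_iff, normSqDelta_eq, innerDelta_eq]
  exact ⟨acoef_mul_deltaW_symm hc hw hτ fun a ha => sq_pos_iff.mp (hτsq a ha).1,
    hL.mem_left, hL.bounded, hL.inner_eq⟩

open RootSystemData in
/-- for real multiplicity parameters with `0 < τ_a² < 1` and `ω`
(quasi-)minuscule: (a) `a_{λ,ν} δ_λ = a_{λ-ν,-ν} δ_{λ-ν}` for all `λ ∈ P`, `ν ∈ W₀ω`;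
(b) the Laplacian `L_ω` is bounded on `ℓ²(P,δ)` and `⟨L_ω f, g⟩_δ = ⟨f, L_{ω∗} g⟩_δ`,
where `ω∗ = -v₀ω` with `v₀` the longest element of `W₀`. -/
theorem statement17 {V : Type*} [NormedAddCommGroup V] [InnerProductSpace ℝ V]
    (D : RootSystemData V) (cz : ℤ) (hc : 1 < cz)
    (τ : V × ℤ → ℝ) (hτsq : ∀ a : V × ℤ, D.IsAffRoot a → 0 < τ a ^ 2 ∧ τ a ^ 2 < 1)
    (hτinv : ∀ w ∈ D.Wext (cz : ℝ), ∀ a b : V × ℤ, D.IsAffRoot a → D.IsAffRoot b →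
      mapsRoot (cz : ℝ) w a b → τ a = τ b)
    (wmin : V → Equiv.Perm V) (hwmin : D.IsWmin (cz : ℝ) wmin)
    (ω : V) (hω : D.IsMinuscule ω ∨ D.IsQuasiMinuscule ω)
    (v0 : Equiv.Perm V) (hv0 : v0 ∈ D.W0 ∧ ∀ w ∈ D.W0, D.len (cz : ℝ) w ≤ D.len (cz : ℝ) v0)
    (orb orbStar : Finset V)
    (horb : ∀ ν : V, ν ∈ orb ↔ ∃ w ∈ D.W0, w ω = ν)
    (horbStar : ∀ ν : V, ν ∈ orbStar ↔ ∃ w ∈ D.W0, w (-(v0 ω)) = ν) :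
    -- (a)
    (∀ lam ∈ D.weightLattice, ∀ ν : V, (∃ w ∈ D.W0, w ω = ν) →
      D.acoef (cz : ℝ) τ wmin lam ν * deltaW D (cz : ℝ) τ wmin lam
        = D.acoef (cz : ℝ) τ wmin (lam - ν) (-ν) * deltaW D (cz : ℝ) τ wmin (lam - ν)) ∧
    -- (b)
    ((∀ f : V → ℂ, MemL2 D (cz : ℝ) τ wmin f →
        MemL2 D (cz : ℝ) τ wmin (Lop D (cz : ℝ) τ wmin orb f)) ∧
      (∃ C : ℝ, ∀ f : V → ℂ, MemL2 D (cz : ℝ) τ wmin f →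
        normSqDelta D (cz : ℝ) τ wmin (Lop D (cz : ℝ) τ wmin orb f)
          ≤ C * normSqDelta D (cz : ℝ) τ wmin f) ∧
      (∀ f g : V → ℂ, MemL2 D (cz : ℝ) τ wmin f → MemL2 D (cz : ℝ) τ wmin g →
        innerDelta D (cz : ℝ) τ wmin (Lop D (cz : ℝ) τ wmin orb f) g
          = innerDelta D (cz : ℝ) τ wmin f (Lop D (cz : ℝ) τ wmin orbStar g))) := by
  have hωP : ω ∈ D.weightLattice ∧ D.HasSmallPairings ω ∨ ω ∈ D.R0 :=
    hω.imp (fun h => ⟨h.1, h.hasSmallPairings⟩) fun h : ω = D.hshort =>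
      h ▸ D.pos_subset D.hshort_mem
  have hτ : D.IsWeylInvariant cz τ := fun w hw =>
    hτinv w (Subgroup.closure_mono Set.subset_union_left hw)
  obtain ⟨ha, hb⟩ := statement17_general D (by exact_mod_cast zero_lt_one.trans hc)
    (fun a ha => ⟨(hτsq a ha).1, (hτsq a ha).2.le⟩) hτ hwmin hωP hv0.1 horb horbStar
  exact ⟨fun lam _ ν _ => ha lam ν, hb⟩
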